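/- arXiv:2104.05141 — 2 statements merged into one kernel-verified Lean document; each statement's English description precedes it below -/
import Mathlib

section
/- Let k ≥ 1, let F_k be the free group of rank k, and let Γ = F_k × ℤ. There exists a Γ-subshift over a finite alphabet which is effectively closed by patterns but is not sofic. In particular, F_k × ℤ is not self-simulable. -/
open scoped Pointwise

namespace SelfSim

/-- The left shift action of a group `G` on the full shift `G → A`:
`(g · x)(h) = x (g⁻¹ h)`. -/
def shift {G A : Type*} [Group G] (g : G) (x : G → A) : G → A := fun h => x (g⁻¹ * h)

/-- A `G`-subshift: a closed, shift-invariant subset of the full shift `G → A`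
(`A` carrying its topology, `G → A` the product topology). -/
def IsSubshift {G A : Type*} [Group G] [TopologicalSpace A] (X : Set (G → A)) : Prop :=
  IsClosed X ∧ ∀ (g : G) (x : G → A), x ∈ X → shift g x ∈ X

/-- A subshift of finite type: there are a finite set `F ⊆ G` and a set `𝓛` of patterns
on `F` such that `x ∈ X` iff every translate of `x` restricted to `F` lies in `𝓛`. -/
def IsSFT {G A : Type*} [Group G] (X : Set (G → A)) : Prop :=
  ∃ (F : Finset G) (L : Set (↥F → A)),
    ∀ x : G → A, x ∈ X ↔ ∀ g : G, (fun h : ↥F => x (g * (h : G))) ∈ L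

/-- `φ` is a topological factor map from the shift action on `Z ⊆ G → A` onto the
action `act` of `G` on `Y ⊆ β`: continuous on `Z`, mapping `Z` into and onto `Y`,
and equivariant. -/
def IsFactorMapOnto {G A β : Type*} [Group G] [TopologicalSpace A] [TopologicalSpace β]
    (Z : Set (G → A)) (φ : (G → A) → β) (act : G → β → β) (Y : Set β) : Prop :=
  ContinuousOn φ Z ∧ Set.MapsTo φ Z Y ∧ Set.SurjOn φ Z Y ∧
    ∀ (g : G) (x : G → A), x ∈ Z → φ (shift g x) = act g (φ x)

/-- A sofic subshift: a topological factor of some subshift of finite type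
(over some finite alphabet, which we may take to be `Fin k`). -/
def IsSofic {G A : Type*} [Group G] [TopologicalSpace A] (Y : Set (G → A)) : Prop :=
  ∃ (k : ℕ) (Z : Set (G → Fin k)) (φ : (G → Fin k) → (G → A)),
    IsSFT Z ∧ IsFactorMapOnto Z φ shift Y

/-- Recursively enumerable predicate. -/
def RE {α : Type*} [Primcodable α] (p : α → Prop) : Prop :=
  Partrec fun a => Part.assert (p a) fun _ => Part.some ()

/-- `x : ℕ → A` begins with the finite word `w`. -/
def ExtendsWord {A : Type*} (x : ℕ → A) (w : List A) : Prop :=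
  ∀ i : Fin w.length, x i = w.get i

/-- A closed subset `Z ⊆ A^ℕ` is effectively closed if the set of words whose
cylinder is disjoint from `Z` is recursively enumerable. -/
def EffectivelyClosedSet {A : Type*} [Primcodable A] [TopologicalSpace A]
    (Z : Set (ℕ → A)) : Prop :=
  IsClosed Z ∧ RE fun w : List A => ∀ x : ℕ → A, ExtendsWord x w → x ∉ Z

/-- `act` defines an action of `G` on the set `X ⊆ β`. -/
def IsActionOn {G β : Type*} [Group G] (act : G → β → β) (X : Set β) : Prop :=
  (∀ g : G, Set.MapsTo (act g) X X) ∧ (∀ x ∈ X, act 1 x = x) ∧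
    ∀ (g h : G) (x : β), x ∈ X → act (g * h) x = act g (act h x)

/-- The set representation of the action `act` of `G` on `X ⊆ A^ℕ` with respect to the
finite generating tuple `s : Fin m → G` (playing the role of the generating set `S`):
the set of `y ∈ (A^S)^ℕ` of the form `y(n)(s) = (s · x)(n)` for some `x ∈ X`. -/
def SetRep {G A : Type*} [Group G] {m : ℕ} (s : Fin m → G)
    (act : G → (ℕ → A) → ℕ → A) (X : Set (ℕ → A)) : Set (ℕ → (Fin m → A)) :=
  {y | ∃ x ∈ X, ∀ i : Fin m, (fun n => y n i) = act (s i) x}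

/-- The action `act` of `G` on the closed set `X ⊆ A^ℕ` is effectively closed with respect
to the finite generating tuple `s` (which contains `1` and generates `G` as a monoid):
its set representation is an effectively closed subset of `(A^S)^ℕ`. -/
def IsEffClosedActionWith {G A : Type*} [Group G] [Primcodable A] [TopologicalSpace A]
    {m : ℕ} (s : Fin m → G) (act : G → (ℕ → A) → ℕ → A) (X : Set (ℕ → A)) : Prop :=
  IsClosed X ∧ IsActionOn act X ∧ (∃ i, s i = 1) ∧
    Submonoid.closure (Set.range s) = ⊤ ∧
    EffectivelyClosedSet (SetRep s act X)

/-- The action `act` of `G` on `X ⊆ A^ℕ` is effectively closed (with respect to some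
finite generating set containing `1`). -/
def IsEffClosedAction {G A : Type*} [Group G] [Primcodable A] [TopologicalSpace A]
    (act : G → (ℕ → A) → ℕ → A) (X : Set (ℕ → A)) : Prop :=
  ∃ (m : ℕ) (s : Fin m → G), IsEffClosedActionWith s act X

/-- The action `act` of `G` on `X ⊆ A^ℕ` is a topological factor of some `G`-subshift
of finite type. -/
def IsFactorOfSFT {G A : Type*} [Group G] [TopologicalSpace A]
    (act : G → (ℕ → A) → ℕ → A) (X : Set (ℕ → A)) : Prop :=
  ∃ (k : ℕ) (Z : Set (G → Fin k)) (φ : (G → Fin k) → (ℕ → A)),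
    IsSFT Z ∧ IsFactorMapOnto Z φ act X

/-- A group `G` is (dynamically) self-simulable if every effectively closed action of `G`
on a closed subset of `{0,1}^ℕ` is a topological factor of a `G`-subshift of finite type. -/
def SelfSimulable (G : Type*) [Group G] : Prop :=
  ∀ (X : Set (ℕ → Bool)) (act : G → (ℕ → Bool) → ℕ → Bool),
    IsEffClosedAction act X → IsFactorOfSFT act X

/-- Amenability via the Følner condition: for every finite `K` and `δ > 0` there is a
nonempty finite `F` with `|KF △ F| ≤ δ |F|`. -/
def Amenable (G : Type*) [Group G] : Prop :=
  ∀ K : Set G, K.Finite → ∀ δ : ℝ, 0 < δ →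
    ∃ F : Set G, F.Finite ∧ F.Nonempty ∧
      ((symmDiff (K * F) F).ncard : ℝ) ≤ δ * F.ncard

/-- A finitely generated group is recursively presented: for some finite tuple generating
`G` as a monoid, the set of words evaluating to the identity is recursively enumerable. -/
def RecursivelyPresented (G : Type*) [Group G] : Prop :=
  ∃ (m : ℕ) (s : Fin m → G), Submonoid.closure (Set.range s) = ⊤ ∧
    RE fun w : List (Fin m) => (w.map s).prod = 1

/-- A finitely generated group has decidable word problem: for some finite tuple generating
`G` as a monoid, the set of words evaluating to the identity is decidable. -/
def DecidableWordProblem (G : Type*) [Group G] : Prop :=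
  ∃ (m : ℕ) (s : Fin m → G), Submonoid.closure (Set.range s) = ⊤ ∧
    ComputablePred fun w : List (Fin m) => (w.map s).prod = 1

/-- A pattern coding `c` (a finite list of pairs (word over the generators, letter))
holds in the configuration `x` at position `g`: `x (g ⬝ w̲) = a` for every pair `(w, a)`
of `c`. This says exactly that `x ∈ g·[c]`. -/
def PCHolds {G A : Type*} [Group G] {m : ℕ} (s : Fin m → G) (x : G → A) (g : G)
    (c : List (List (Fin m) × A)) : Prop :=
  ∀ p ∈ c, x (g * (p.1.map s).prod) = p.2

/-- A `G`-subshift `X ⊆ A^G` is effectively closed by patterns: for some finite generating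
tuple `s`, there is a recursively enumerable set `𝒞` of pattern codings such that `X` is the
set of configurations avoiding every translate of every cylinder `[c]`, `c ∈ 𝒞`. -/
def EffClosedByPatterns {G A : Type*} [Group G] [Primcodable A] (X : Set (G → A)) : Prop :=
  ∃ (m : ℕ) (s : Fin m → G), Submonoid.closure (Set.range s) = ⊤ ∧
    ∃ 𝒞 : Set (List (List (Fin m) × A)), RE (· ∈ 𝒞) ∧
      X = {x : G → A | ∀ (g : G) (c : List (List (Fin m) × A)), c ∈ 𝒞 → ¬ PCHolds s x g c}

/-- Word metric distance associated to a finite tuple `s` generating `G` as a monoid. -/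
noncomputable def wordDist {G : Type*} [Group G] {m : ℕ} (s : Fin m → G) (g h : G) : ℕ :=
  sInf {n : ℕ | ∃ w : List (Fin m), w.length = n ∧ (w.map s).prod = g⁻¹ * h}

/-- Two finitely generated groups are quasi-isometric (with respect to word metrics given
by some finite generating sets). -/
def QuasiIsometric (G₁ G₂ : Type*) [Group G₁] [Group G₂] : Prop :=
  ∃ (m₁ : ℕ) (s₁ : Fin m₁ → G₁) (m₂ : ℕ) (s₂ : Fin m₂ → G₂),
    Submonoid.closure (Set.range s₁) = ⊤ ∧ Submonoid.closure (Set.range s₂) = ⊤ ∧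
    ∃ (f : G₂ → G₁) (A B C : ℝ), 1 ≤ A ∧ 0 ≤ B ∧ 0 ≤ C ∧
      (∀ x y : G₂,
        (1 / A) * (wordDist s₂ x y : ℝ) - B ≤ (wordDist s₁ (f x) (f y) : ℝ) ∧
        (wordDist s₁ (f x) (f y) : ℝ) ≤ A * (wordDist s₂ x y : ℝ) + B) ∧
      ∀ z : G₁, ∃ x : G₂, (wordDist s₁ z (f x) : ℝ) ≤ C

/-- A finitely presented group: a quotient of a finitely generated free group by the
normal closure of finitely many relators. -/
def FinitelyPresentedGroup (G : Type*) [Group G] : Prop :=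
  ∃ (m : ℕ) (f : FreeGroup (Fin m) →* G) (R : Finset (FreeGroup (Fin m))),
    Function.Surjective f ∧ f.ker = Subgroup.normalClosure (R : Set (FreeGroup (Fin m)))

/-- A subgroup `Δ ≤ G` is mediated: there is a finite generating set `T` of `G` such that
`Δ ∩ tΔt⁻¹` is non-amenable for every `t ∈ T`. -/
def Mediated {G : Type*} [Group G] (Δ : Subgroup G) : Prop :=
  ∃ T : Finset G, Subgroup.closure (T : Set G) = ⊤ ∧
    ∀ t ∈ T, ¬ Amenable ↥(Δ ⊓ Subgroup.map (MulAut.conj t).toMonoidHom Δ)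

end SelfSim

namespace SelfSim

section Tree

variable {k : ℕ}

/-- Exponent sum of the generator `i₀`. -/
def expSum (i₀ : Fin k) : FreeGroup (Fin k) →* Multiplicative ℤ :=
  FreeGroup.lift fun i => Multiplicative.ofAdd (if i = i₀ then 1 else 0)

theorem expSum_zpow (i₀ : Fin k) (n : ℤ) :
    (expSum i₀ (FreeGroup.of i₀ ^ n)).toAdd = n := by
  simp [expSum]

theorem zpow_inj (i₀ : Fin k) : Function.Injective fun n : ℤ => (FreeGroup.of i₀) ^ n := by
  intro m n h
  have := congrArg (fun g => (expSum i₀ g).toAdd) h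
  simpa only [expSum_zpow] using this

open Classical in
/-- A permutation which tracks crossings of one edge of the Cayley tree. -/
noncomputable def edgePerm (i₀ i : Fin k) : Equiv.Perm (FreeGroup (Fin k) × ℤ) where
  toFun p := (FreeGroup.of i * p.1, p.2 + if i = i₀ ∧ p.1 = 1 then 1 else 0)
  invFun p := ((FreeGroup.of i)⁻¹ * p.1,
    p.2 - if i = i₀ ∧ (FreeGroup.of i)⁻¹ * p.1 = 1 then 1 else 0)
  left_inv p := by ext <;> simp
  right_inv p := by ext <;> simp

/-- The action generated by the `edgePerm`s. -/
noncomputable def edgeHom (i₀ : Fin k) : FreeGroup (Fin k) →* Equiv.Perm (FreeGroup (Fin k) × ℤ) :=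
  FreeGroup.lift (edgePerm i₀)

/-- Signed number of crossings of the edge. -/
noncomputable def crossings (i₀ : Fin k) (g : FreeGroup (Fin k)) : ℤ := (edgeHom i₀ g (1, 0)).2

theorem edgeHom_fst (i₀ : Fin k) (g : FreeGroup (Fin k)) (p) : (edgeHom i₀ g p).1 = g * p.1 := by
  induction g using FreeGroup.induction_on generalizing p with
  | C1 => simp
  | of i => simp [edgeHom, edgePerm]
  | inv_of i h =>
    simp only [edgeHom, map_inv, FreeGroup.lift_apply_of]
    rfl
  | mul x y hx hy => rw [map_mul, Equiv.Perm.mul_apply, hx, hy, mul_assoc]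

theorem crossings_one (i₀ : Fin k) : crossings i₀ 1 = 0 := by simp [crossings]

open Classical in
theorem crossings_of_mul (i₀ i : Fin k) (g : FreeGroup (Fin k)) :
    crossings i₀ (FreeGroup.of i * g) = crossings i₀ g + if i = i₀ ∧ g = 1 then 1 else 0 := by
  have h := edgeHom_fst i₀ g (1, 0)
  simp only [mul_one] at h
  simp only [crossings, map_mul, Equiv.Perm.mul_apply]
  nth_rewrite 1 [edgeHom]
  simp [edgePerm, h]

theorem crossings_pow (i₀ : Fin k) (n : ℕ) :
    crossings i₀ (FreeGroup.of i₀ ^ ((n : ℤ) + 1)) = 1 := by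
  induction n with
  | zero =>
    have := crossings_of_mul i₀ i₀ 1
    simpa [crossings_one] using this
  | succ n ih =>
    have h := crossings_of_mul i₀ i₀ (FreeGroup.of i₀ ^ ((n : ℤ) + 1))
    have h1 : FreeGroup.of i₀ ^ ((n : ℤ) + 1) ≠ 1 := by
      intro h0
      have := zpow_inj i₀ (a₁ := (n : ℤ) + 1) (a₂ := 0) (by simpa using h0)
      omega
    rw [← zpow_one_add, ih] at h
    simp only [h1, and_false, if_false, add_zero] at h
    rw [show ((n + 1 : ℕ) : ℤ) + 1 = 1 + ((n : ℤ) + 1) by push_cast; ring, h]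

theorem crossings_neg_pow (i₀ : Fin k) (n : ℕ) :
    crossings i₀ (FreeGroup.of i₀ ^ (-(n : ℤ))) = 0 := by
  induction n with
  | zero => simp [crossings_one]
  | succ n ih =>
    have h := crossings_of_mul i₀ i₀ (FreeGroup.of i₀ ^ (-((n + 1 : ℕ) : ℤ)))
    have h1 : FreeGroup.of i₀ ^ (-((n + 1 : ℕ) : ℤ)) ≠ 1 := by
      intro h0
      have := zpow_inj i₀ (a₁ := -((n + 1 : ℕ) : ℤ)) (a₂ := 0) (by simpa using h0)
      omega
    rw [← zpow_one_add] at h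
    simp only [h1, and_false, if_false, add_zero] at h
    rw [← h, ← ih]; push_cast; ring_nf

/-- One of the two halves of the tree. -/
def Side (i₀ : Fin k) (g : FreeGroup (Fin k)) : Prop := crossings i₀ g⁻¹ = 1

theorem side_finite (i₀ : Fin k) (h : FreeGroup (Fin k)) :
    {g | ¬ (Side i₀ (g * h) ↔ Side i₀ g)}.Finite := by
  classical
  have key : ∀ i, {g | ¬ (Side i₀ (g * (FreeGroup.of i)⁻¹) ↔ Side i₀ g)}.Finite := by
    intro i
    refine (Set.finite_singleton 1).subset ?_
    intro g hg
    by_contra hne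
    simp only [Set.mem_singleton_iff] at hne
    apply hg
    simp only [Side, mul_inv_rev, inv_inv, crossings_of_mul]
    simp [hne]
  induction h using FreeGroup.induction_on with
  | C1 => simp
  | inv_of i _ => exact key i
  | of i =>
    refine ((key i).image (fun g => g * (FreeGroup.of i)⁻¹)).subset ?_
    intro g hg
    refine ⟨g * FreeGroup.of i, ?_, by simp⟩
    simp only [Set.mem_ofPred_eq, mul_inv_cancel_right] at hg ⊢
    tauto
  | mul x y hx hy =>
    refine (hx.union (hy.image (fun g => g * x⁻¹))).subset ?_
    intro g hg
    by_cases h1 : Side i₀ (g * x) ↔ Side i₀ g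
    · right
      refine ⟨g * x, ?_, by simp⟩
      simp only [Set.mem_ofPred_eq, ← mul_assoc] at hg ⊢
      tauto
    · left; exact h1

theorem side_neg (i₀ : Fin k) (n : ℕ) (hn : 1 ≤ n) : Side i₀ (FreeGroup.of i₀ ^ (-(n : ℤ))) := by
  obtain ⟨m, rfl⟩ := Nat.exists_eq_add_of_le' hn
  have := crossings_pow i₀ m
  rw [Side, ← zpow_neg, neg_neg]
  exact_mod_cast this

theorem not_side_pos (i₀ : Fin k) (n : ℕ) : ¬ Side i₀ (FreeGroup.of i₀ ^ (n : ℤ)) := by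
  have := crossings_neg_pow i₀ n
  simp only [Side, ← zpow_neg, this]
  simp

theorem side_eventually (i₀ : Fin k) (K : Finset (FreeGroup (Fin k))) :
    ∃ N : ℤ, ∀ n : ℤ, N ≤ n → ∀ h ∈ K,
      Side i₀ (FreeGroup.of i₀ ^ (-n) * h) ∧ ¬ Side i₀ (FreeGroup.of i₀ ^ n * h) := by
  have hfin : (⋃ h ∈ K, {g | ¬ (Side i₀ (g * h) ↔ Side i₀ g)}).Finite :=
    K.finite_toSet.biUnion fun h _ => side_finite i₀ h
  have hfin2 := hfin.preimage (zpow_inj i₀).injOn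
  obtain ⟨B, hB⟩ := hfin2.bddAbove
  obtain ⟨C, hC⟩ := hfin2.bddBelow
  refine ⟨max 1 (max (B + 1) (1 - C)), fun n hn h hh => ?_⟩
  have h1 : 1 ≤ n := le_trans (le_max_left _ _) hn
  have h2 : B + 1 ≤ n := le_trans ((le_max_left _ _).trans (le_max_right _ _)) hn
  have h3 : 1 - C ≤ n := le_trans ((le_max_right _ _).trans (le_max_right _ _)) hn
  obtain ⟨m, rfl⟩ := Int.eq_ofNat_of_zero_le (by omega : 0 ≤ n)
  constructor
  · by_contra hs
    have : -(m : ℤ) ∈ (fun n : ℤ => (FreeGroup.of i₀) ^ n) ⁻¹'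
        (⋃ h ∈ K, {g | ¬ (Side i₀ (g * h) ↔ Side i₀ g)}) := by
      simp only [Set.mem_preimage, Set.mem_iUnion]
      refine ⟨h, hh, ?_⟩
      have := side_neg i₀ m (by omega)
      simp only [Set.mem_ofPred_eq]
      tauto
    have := hC this
    omega
  · intro hs
    have : (m : ℤ) ∈ (fun n : ℤ => (FreeGroup.of i₀) ^ n) ⁻¹'
        (⋃ h ∈ K, {g | ¬ (Side i₀ (g * h) ↔ Side i₀ g)}) := by
      simp only [Set.mem_preimage, Set.mem_iUnion]
      refine ⟨h, hh, ?_⟩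
      have := not_side_pos i₀ m
      simp only [Set.mem_ofPred_eq]
      tauto
    have := hB this
    omega

end Tree

end SelfSim
namespace SelfSim

section Compactness

theorem IsSFT.isClosed {G : Type*} [Group G] {b : ℕ} {Z : Set (G → Fin b)} (hZ : IsSFT Z) :
    IsClosed Z := by
  obtain ⟨F, L, h⟩ := hZ
  have : Z = ⋂ g : G, (fun x : G → Fin b => fun h : ↥F => x (g * (h : G))) ⁻¹' L := by
    ext x; simp [h]
  rw [this]
  refine isClosed_iInter fun g => IsClosed.preimage (by fun_prop) (isClosed_discrete L)

theorem IsSFT.shift_mem {G : Type*} [Group G] {b : ℕ} {Z : Set (G → Fin b)} (hZ : IsSFT Z)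
    (g : G) {z : G → Fin b} (hz : z ∈ Z) : shift g z ∈ Z := by
  obtain ⟨F, L, h⟩ := hZ
  rw [h] at hz ⊢
  intro g'
  simpa only [shift, mul_assoc] using hz (g⁻¹ * g')

/-- Finite determination by compactness. -/
theorem finite_window {G : Type*} {b : ℕ} {Z : Set (G → Fin b)} (hZ : IsClosed Z)
    {β : Type*} [TopologicalSpace β] [DiscreteTopology β] {q : (G → Fin b) → β}
    (hq : ContinuousOn q Z) (T : Set G)
    (hT : ∀ z ∈ Z, ∀ z' ∈ Z, (∀ h ∈ T, z h = z' h) → q z = q z') :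
    ∃ K : Finset G, (K : Set G) ⊆ T ∧
      ∀ z ∈ Z, ∀ z' ∈ Z, (∀ h ∈ K, z h = z' h) → q z = q z' := by
  classical
  let P : Set ((G → Fin b) × (G → Fin b)) :=
    (Z ×ˢ Z) ∩ (fun p => (q p.1, q p.2)) ⁻¹' {r : β × β | r.1 ≠ r.2}
  have hcont : ContinuousOn (fun p : (G → Fin b) × (G → Fin b) => (q p.1, q p.2)) (Z ×ˢ Z) :=
    (hq.comp continuousOn_fst fun p hp => hp.1).prodMk
      (hq.comp continuousOn_snd fun p hp => hp.2)
  have hP : IsCompact P :=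
    (hcont.preimage_isClosed_of_isClosed (hZ.prod hZ) (isClosed_discrete _)).isCompact
  have hC : ∀ t : T, IsClosed {p : (G → Fin b) × (G → Fin b) | p.1 t.1 = p.2 t.1} :=
    fun t => isClosed_eq (by fun_prop) (by fun_prop)
  obtain ⟨u, hu⟩ := hP.elim_finite_subfamily_closed _ hC (by
    ext p
    simp only [Set.mem_inter_iff, Set.mem_iInter, Set.mem_empty_iff_false, iff_false, not_and]
    intro hp hall
    exact hp.2 (hT _ hp.1.1 _ hp.1.2 fun h hh => hall ⟨h, hh⟩))
  refine ⟨u.image Subtype.val, ?_, ?_⟩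
  · intro x hx
    simp only [Finset.coe_image, Set.mem_image] at hx
    obtain ⟨y, _, rfl⟩ := hx
    exact y.2
  · intro z hz z' hz' hag
    by_contra hne
    have : (z, z') ∈ P ∩ ⋂ i ∈ u, {p : (G → Fin b) × (G → Fin b) | p.1 i.1 = p.2 i.1} := by
      refine ⟨⟨⟨hz, hz'⟩, hne⟩, ?_⟩
      simp only [Set.mem_iInter]
      intro i hi
      exact hag _ (Finset.mem_image_of_mem _ hi)
    rw [hu] at this
    exact this

end Compactness

section Key

variable {k : ℕ}

/-- Gluing along a finite interface times `ℤ`. -/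
theorem gluing (i₀ : Fin k) {b : ℕ} {Z : Set (FreeGroup (Fin k) × Multiplicative ℤ → Fin b)}
    (hZ : IsSFT Z) :
    ∃ I : Finset (FreeGroup (Fin k)), ∀ z ∈ Z, ∀ z' ∈ Z,
      (∀ g ∈ I, ∀ n, z (g, n) = z' (g, n)) →
      ∃ y ∈ Z, ∀ g n, (Side i₀ g → y (g, n) = z' (g, n)) ∧ (¬ Side i₀ g → y (g, n) = z (g, n)) := by
  classical
  obtain ⟨F, L, h⟩ := hZ
  have hfin : (⋃ w ∈ F, {g | ¬ (Side i₀ (g * w.1) ↔ Side i₀ g)}).Finite :=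
    F.finite_toSet.biUnion fun h _ => side_finite i₀ h.1
  let S := hfin.toFinset
  refine ⟨Finset.image₂ (fun g w => g * w.1) S F, fun z hz z' hz' hag => ?_⟩
  refine ⟨fun p => if Side i₀ p.1 then z' p else z p, ?_, fun g n => ?_⟩
  · rw [h] at hz hz' ⊢
    rintro ⟨g, n⟩
    by_cases hg : g ∈ S
    · convert hz (g, n) using 1
      funext w
      have := hag (g * w.1.1) (Finset.mem_image₂_of_mem hg w.2) (n * w.1.2)
      change (if _ then z' (g * w.1.1, n * w.1.2) else z (g * w.1.1, n * w.1.2)) =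
        z (g * w.1.1, n * w.1.2)
      split_ifs
      · exact this.symm
      · rfl
    · have hg' : ∀ w ∈ F, (Side i₀ (g * w.1) ↔ Side i₀ g) := by
        intro w hw
        by_contra hc
        apply hg
        simp only [S, Set.Finite.mem_toFinset, Set.mem_iUnion]
        exact ⟨w, hw, hc⟩
      by_cases hs : Side i₀ g
      · convert hz' (g, n) using 1
        funext w
        have := (hg' w.1 w.2).2 hs
        simp [this]
      · convert hz (g, n) using 1
        funext w
        have : ¬ Side i₀ (g * w.1.1) := fun h => hs ((hg' w.1 w.2).1 h)
        simp [this]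
  · constructor <;> intro hs <;> simp [hs]

theorem counting (M D R : ℕ) (hM : 1 ≤ M) (hD : 2 * M ≤ 2 ^ D) :
    ∃ N : ℕ, M ^ (N + 2 * R + 1) < 2 ^ (D * N) := by
  obtain ⟨N, hN⟩ : ∃ N, M ^ (2 * R + 1) < 2 ^ N := ⟨_, Nat.lt_two_pow_self⟩
  refine ⟨N, ?_⟩
  calc M ^ (N + 2 * R + 1) = M ^ N * M ^ (2 * R + 1) := by ring
    _ < M ^ N * 2 ^ N := by gcongr
    _ = (2 * M) ^ N := by rw [mul_pow]; ring
    _ ≤ (2 ^ D) ^ N := by gcongr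
    _ = 2 ^ (D * N) := by rw [pow_mul]

/-- The key obstruction: too many observables cannot be transmitted through the interface. -/
theorem key (i₀ : Fin k) {b : ℕ} {Z : Set (FreeGroup (Fin k) × Multiplicative ℤ → Fin b)}
    (hZ : IsSFT Z) :
    ∃ D : ℕ, ∀ (Z' : Set (FreeGroup (Fin k) × Multiplicative ℤ → Fin b))
      (q : Fin D → (FreeGroup (Fin k) × Multiplicative ℤ → Fin b) → Bool),
      Z' ⊆ Z → IsClosed Z' → (∀ n, ∀ z ∈ Z', shift (1, n) z ∈ Z') →
      (∀ d, ContinuousOn (q d) Z') →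
      (∀ z ∈ Z', ∀ z' ∈ Z', ∀ y ∈ Z,
        (∀ g n, (Side i₀ g → y (g, n) = z' (g, n)) ∧ (¬ Side i₀ g → y (g, n) = z (g, n))) →
        ∀ d, q d z = q d z') →
      (∀ β : Fin D → ℤ → Bool, ∃ z ∈ Z', ∀ d n,
        q d (shift (1, Multiplicative.ofAdd (-n)) z) = β d n) → False := by
  classical
  obtain ⟨I, hI⟩ := gluing i₀ hZ
  let E := I → Fin b
  let M := Fintype.card E
  obtain ⟨D, hD⟩ : ∃ D, 2 * M ≤ 2 ^ D := ⟨_, Nat.lt_two_pow_self.le⟩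
  refine ⟨D, fun Z' q hZZ hcl hsh hq hdet hsurj => ?_⟩
  -- windows
  have hwin : ∀ d, ∃ R : ℕ, ∀ z ∈ Z', ∀ z' ∈ Z',
      (∀ g ∈ I, ∀ n : ℤ, |n| ≤ R → z (g, Multiplicative.ofAdd n) = z' (g, Multiplicative.ofAdd n)) →
      q d z = q d z' := by
    intro d
    obtain ⟨K, hKT, hK⟩ := finite_window hcl (hq d) {p | p.1 ∈ I} (by
      intro z hz z' hz' hag
      obtain ⟨y, hy, hy'⟩ := hI z (hZZ hz) z' (hZZ hz') (fun g hg n => hag (g, n) hg)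
      exact hdet z hz z' hz' y hy hy' d)
    refine ⟨K.sup fun p => p.2.toAdd.natAbs, fun z hz z' hz' hag => hK z hz z' hz' ?_⟩
    rintro ⟨g, n⟩ hp
    refine hag g (hKT hp) n.toAdd ?_
    have : n.toAdd.natAbs ≤ K.sup fun p => p.2.toAdd.natAbs :=
      Finset.le_sup (f := fun p : FreeGroup (Fin k) × Multiplicative ℤ => p.2.toAdd.natAbs) hp
    rw [Int.abs_eq_natAbs]
    exact_mod_cast this
  choose R₀ hR₀ using hwin
  let R := Finset.univ.sup R₀
  have hR : ∀ d, R₀ d ≤ R := fun d => Finset.le_sup (Finset.mem_univ d)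
  have hM : 1 ≤ M := by
    obtain ⟨z, hz, _⟩ := hsurj (fun _ _ => true)
    exact Fintype.card_pos_iff.2 ⟨fun g => z (g, 1)⟩
  obtain ⟨N, hN⟩ := counting M D R hM hD
  let ext : (Fin D → Fin N → Bool) → (Fin D → ℤ → Bool) := fun β d n =>
    if h : 0 ≤ n ∧ n < N then β d ⟨n.toNat, by omega⟩ else true
  choose ζ hζ hζq using hsurj
  let Φ : (Fin D → Fin N → Bool) → (Fin (N + 2 * R + 1) → E) := fun β j g =>
    ζ (ext β) (g, Multiplicative.ofAdd ((j : ℤ) - R))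
  have hinj : Function.Injective Φ := by
    intro β β' hβ
    funext d j
    have e1 : ext β d j = β d j := by simp [ext]
    have e2 : ext β' d j = β' d j := by simp [ext]
    rw [← e1, ← e2, ← hζq (ext β), ← hζq (ext β')]
    refine hR₀ d _ (hsh _ _ (hζ _)) _ (hsh _ _ (hζ _)) ?_
    intro g hg n hn
    have hn' : |n| ≤ R := hn.trans (by exact_mod_cast hR d)
    rw [abs_le] at hn'
    have hj := j.2
    have := congrFun (congrFun hβ ⟨(n + j + R).toNat, by omega⟩) ⟨g, hg⟩
    simp only [Φ] at this
    rw [Int.toNat_of_nonneg (by omega)] at this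
    have e : n + (j : ℤ) + R - R = j + n := by ring
    rw [e] at this
    simpa [shift, ofAdd_add] using this
  have := Fintype.card_le_of_injective Φ hinj
  simp only [Fintype.card_fun, Fintype.card_fin, Fintype.card_bool] at this
  rw [← pow_mul, mul_comm N D] at this
  have h2 : Fintype.card (I → Fin b) = M := rfl
  simp only [E, Fintype.card_fun, Fintype.card_fin] at h2 this
  rw [h2] at this
  omega

end Key

end SelfSim
namespace SelfSim

section Words

theorem exists_generators {G : Type*} [Group G] [Group.FG G] (a : G) :
    ∃ (m : ℕ) (s : Fin m → G), Submonoid.closure (Set.range s) = ⊤ ∧ (∃ i, s i = a) := by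
  classical
  obtain ⟨S, hS⟩ := (Monoid.fg_def.1 (inferInstance : Monoid.FG G))
  let S' := insert a S
  refine ⟨S'.card, fun i => (S'.equivFin.symm i : G), ?_, S'.equivFin ⟨a, by simp [S']⟩, by simp⟩
  rw [eq_top_iff, ← hS]
  apply Submonoid.closure_mono
  intro x hx
  exact ⟨S'.equivFin ⟨x, by simp [S']; right; exact hx⟩, by simp⟩

theorem exists_word {G : Type*} [Group G] {m : ℕ} {s : Fin m → G}
    (hs : Submonoid.closure (Set.range s) = ⊤) (g : G) :
    ∃ w : List (Fin m), (w.map s).prod = g := by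
  have hg : g ∈ Submonoid.closure (Set.range s) := by rw [hs]; trivial
  induction hg using Submonoid.closure_induction with
  | mem x hx => obtain ⟨i, rfl⟩ := hx; exact ⟨[i], by simp⟩
  | one => exact ⟨[], by simp⟩
  | mul x y _ _ hx hy =>
    obtain ⟨u, rfl⟩ := hx
    obtain ⟨v, rfl⟩ := hy
    exact ⟨u ++ v, by simp⟩

instance fg_prod {G H : Type*} [Group G] [Group H] [Group.FG G] [Group.FG H] :
    Group.FG (G × H) := by
  classical
  obtain ⟨S, hS⟩ := Group.fg_iff.1 (inferInstance : Group.FG G)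
  obtain ⟨T, hT⟩ := Group.fg_iff.1 (inferInstance : Group.FG H)
  refine Group.fg_iff.2 ⟨(MonoidHom.inl G H) '' S ∪ (MonoidHom.inr G H) '' T, ?_,
    (hS.2.image _).union (hT.2.image _)⟩
  rw [Subgroup.closure_union, ← MonoidHom.map_closure, ← MonoidHom.map_closure, hS.1, hT.1,
    eq_top_iff]
  rintro ⟨g, h⟩ -
  have : (g, h) = (g, 1) * (1, h) := by simp
  rw [this]
  exact mul_mem (Subgroup.mem_sup_left ⟨g, trivial, rfl⟩) (Subgroup.mem_sup_right ⟨h, trivial, rfl⟩)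

end Words

section PartOne

variable {k : ℕ}

/-- The generator along which periodicity is imposed. -/
def genA (i₀ : Fin k) : FreeGroup (Fin k) × Multiplicative ℤ := (FreeGroup.of i₀, 1)

/-- The subshift: two markers (`2`) at distance `p` along `a` force `p`-periodicity along `a`. -/
def markerShift (i₀ : Fin k) : Set (FreeGroup (Fin k) × Multiplicative ℤ → Fin 3) :=
  {x | ∀ u v : FreeGroup (Fin k) × Multiplicative ℤ, ∀ p : ℕ,
    x u = 2 → x (u * genA i₀ ^ p) = 2 → x (v * genA i₀ ^ p) = x v}

theorem markerShift_isSubshift (i₀ : Fin k) : IsSubshift (markerShift i₀) := by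
  constructor
  · have : markerShift i₀ = ⋂ (u) (v) (p : ℕ),
        (fun x : FreeGroup (Fin k) × Multiplicative ℤ → Fin 3 =>
          (x u, x (u * genA i₀ ^ p), x (v * genA i₀ ^ p), x v)) ⁻¹'
          {r | r.1 = 2 → r.2.1 = 2 → r.2.2.1 = r.2.2.2} := by
      ext x
      simp only [Set.mem_iInter]
      rfl
    rw [this]
    exact isClosed_iInter fun u => isClosed_iInter fun v => isClosed_iInter fun p =>
      IsClosed.preimage (by fun_prop) (isClosed_discrete _)
  · intro g x hx u v p h1 h2
    have := hx (g⁻¹ * u) (g⁻¹ * v) p h1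
    simp only [shift, mul_assoc] at this h2 ⊢
    exact this h2

/-- The forbidden pattern codings. -/
def forbidden {m : ℕ} (ia : Fin m) : Set (List (List (Fin m) × Fin 3)) :=
  {c | ∃ (p : ℕ) (w : List (Fin m)) (α β : Fin 3), α ≠ β ∧
    c = [([], 2), (List.replicate p ia, 2), (w, α), (w ++ List.replicate p ia, β)]}

theorem forbidden_primrec {m : ℕ} (ia : Fin m) : PrimrecPred (· ∈ forbidden ia) := by
  let d : List (Fin m) × Fin 3 := ([], 0)
  have hrep : Primrec fun n : ℕ => List.replicate n ia := by
    have : Primrec fun n : ℕ => (List.range n).map fun _ => ia :=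
      Primrec.list_map Primrec.list_range (Primrec.const ia).to₂
    exact this.of_eq fun n => by simp
  have hget : ∀ n : ℕ, Primrec fun c : List (List (Fin m) × Fin 3) => c.getD n d := fun n =>
    (Primrec.list_getD d).comp Primrec.id (Primrec.const n)
  have hu : Primrec fun c : List (List (Fin m) × Fin 3) =>
      List.replicate (c.getD 1 d).1.length ia :=
    hrep.comp (Primrec.list_length.comp (Primrec.fst.comp (hget 1)))
  have hlist : Primrec fun c : List (List (Fin m) × Fin 3) =>
      ([([], 2), (List.replicate (c.getD 1 d).1.length ia, 2), ((c.getD 2 d).1, (c.getD 2 d).2),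
        ((c.getD 2 d).1 ++ List.replicate (c.getD 1 d).1.length ia, (c.getD 3 d).2)] :
        List (List (Fin m) × Fin 3)) := by
    refine Primrec.list_cons.comp (Primrec.const _) (Primrec.list_cons.comp
      (hu.pair (Primrec.const _)) (Primrec.list_cons.comp ((Primrec.fst.comp (hget 2)).pair
        (Primrec.snd.comp (hget 2))) (Primrec.list_cons.comp
        ((Primrec.list_append.comp (Primrec.fst.comp (hget 2)) hu).pair
          (Primrec.snd.comp (hget 3))) (Primrec.const []))))
  have hne : PrimrecPred fun c : List (List (Fin m) × Fin 3) => (c.getD 2 d).2 ≠ (c.getD 3 d).2 :=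
    (Primrec.eq.comp (Primrec.snd.comp (hget 2)) (Primrec.snd.comp (hget 3))).not
  refine (hne.and (Primrec.eq.comp Primrec.id hlist)).of_eq fun c => ?_
  constructor
  · rintro ⟨h1, h2⟩
    exact ⟨_, _, _, _, h1, h2⟩
  · rintro ⟨p, w, α, β, h1, rfl⟩
    exact ⟨by simpa using h1, by simp⟩

theorem _root_.PrimrecPred.toRE {α : Type*} [Primcodable α] {p : α → Prop} (hp : PrimrecPred p) :
    RE p := by
  classical
  have : ComputablePred p := ⟨inferInstance, hp.decide.to_comp⟩
  exact this.to_re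

theorem genA_pow {m : ℕ} {i₀ : Fin k} {s : Fin m → FreeGroup (Fin k) × Multiplicative ℤ}
    {ia : Fin m} (h : s ia = genA i₀) (p : ℕ) :
    ((List.replicate p ia).map s).prod = genA i₀ ^ p := by
  simp [h]

theorem markerShift_eff (i₀ : Fin k) : EffClosedByPatterns (markerShift i₀) := by
  obtain ⟨m, s, hs, ia, hia⟩ := exists_generators (genA i₀)
  refine ⟨m, s, hs, forbidden ia, (forbidden_primrec ia).toRE, ?_⟩
  ext x
  constructor
  · rintro hx g c ⟨p, w, α, β, hne, rfl⟩ hc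
    have h1 := hc ([], 2) (by simp)
    have h2 := hc (List.replicate p ia, 2) (by simp)
    have h3 := hc (w, α) (by simp)
    have h4 := hc (w ++ List.replicate p ia, β) (by simp)
    simp only [List.map_nil, List.prod_nil, mul_one, List.map_append, List.prod_append,
      genA_pow hia] at h1 h2 h3 h4
    apply hne
    rw [← h3, ← h4, ← mul_assoc]
    exact (hx _ _ p h1 h2).symm
  · intro hx u v p h1 h2
    by_contra hne
    obtain ⟨w, hw⟩ := exists_word hs (u⁻¹ * v)
    refine hx u _ ⟨p, w, x v, x (v * genA i₀ ^ p), fun h => hne h.symm, rfl⟩ ?_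
    intro c hc
    simp only [List.mem_cons, List.not_mem_nil, or_false] at hc
    rcases hc with rfl | rfl | rfl | rfl
    · simpa using h1
    · simpa only [genA_pow hia] using h2
    · simp only [hw, mul_inv_cancel_left]
    · simp only [hw, List.map_append, List.prod_append, genA_pow hia, ← mul_assoc,
        mul_inv_cancel, one_mul]

theorem periodic_iterate {i₀ : Fin k} {x : FreeGroup (Fin k) × Multiplicative ℤ → Fin 3} {p : ℕ}
    (h : ∀ v, x (v * genA i₀ ^ p) = x v) (n t : ℤ) (j : Multiplicative ℤ) :
    x (FreeGroup.of i₀ ^ (n + t * p), j) = x (FreeGroup.of i₀ ^ n, j) := by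
  have step : ∀ n : ℤ, x (FreeGroup.of i₀ ^ (n + p), j) = x (FreeGroup.of i₀ ^ n, j) := by
    intro n
    rw [← h (FreeGroup.of i₀ ^ n, j)]
    congr 1
    simp [genA, zpow_add]
  induction t using Int.induction_on with
  | zero => simp
  | succ t ih => rw [← ih, ← step (n + t * p)]; congr 3; ring
  | pred t ih => rw [← ih, ← step (n + (-t - 1) * p)]; congr 3; ring

/-- Test configurations. -/
def testVal (D : ℕ) (β : Fin D → ℤ → Bool) (n j : ℤ) : Fin 3 :=
  if ((D + 1 : ℕ) : ℤ) ∣ n then 2 else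
    if h : (n % ((D + 1 : ℕ) : ℤ)).toNat - 1 < D then
      (if β ⟨_, h⟩ j then 1 else 0) else 0

theorem testVal_eq_two (D : ℕ) (β : Fin D → ℤ → Bool) (n j : ℤ) :
    testVal D β n j = 2 ↔ ((D + 1 : ℕ) : ℤ) ∣ n := by
  unfold testVal
  split_ifs <;> simp_all

theorem testVal_mem (i₀ : Fin k) (D : ℕ) (β : Fin D → ℤ → Bool) :
    (fun g : FreeGroup (Fin k) × Multiplicative ℤ =>
      testVal D β (expSum i₀ g.1).toAdd g.2.toAdd) ∈ markerShift i₀ := by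
  intro u v p h1 h2
  have hexp : ∀ u : FreeGroup (Fin k) × Multiplicative ℤ,
      (expSum i₀ (u * genA i₀ ^ p).1).toAdd = (expSum i₀ u.1).toAdd + p := by
    intro u
    have := expSum_zpow i₀ p
    rw [zpow_natCast] at this
    simp only [genA, Prod.fst_mul, Prod.pow_fst, map_mul, toAdd_mul, this]
  have hsnd : ∀ u : FreeGroup (Fin k) × Multiplicative ℤ, (u * genA i₀ ^ p).2 = u.2 := by
    intro u; simp [genA]
  simp only [testVal_eq_two, hexp] at h1 h2
  have hp := (Int.dvd_add_right h1).1 h2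
  simp only [hexp, hsnd]
  obtain ⟨c, hc⟩ := hp
  simp only [testVal, hc, Int.add_mul_emod_self_left, Int.dvd_add_left (Dvd.intro c rfl)]

theorem testVal_read (D : ℕ) (β : Fin D → ℤ → Bool) (d : Fin D) (j : ℤ) :
    decide (testVal D β ((d : ℤ) + 1) j = 1) = β d j := by
  have hd := d.2
  have h1 : ((d : ℤ) + 1) % ((D + 1 : ℕ) : ℤ) = d + 1 := Int.emod_eq_of_lt (by omega) (by omega)
  have h2 : ¬ ((D + 1 : ℕ) : ℤ) ∣ (d : ℤ) + 1 := by
    intro h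
    have := Int.emod_eq_zero_of_dvd h
    omega
  have h3 : ((d : ℤ) + 1).toNat - 1 = d := by omega
  simp only [testVal, h2, if_false, h1, h3, hd, dite_true]
  cases β d j <;> simp

theorem markerShift_not_sofic (i₀ : Fin k) : ¬ IsSofic (markerShift i₀) := by
  classical
  rintro ⟨b, Z, φ, hZ, hφ, hmaps, hsurj, heq⟩
  obtain ⟨K, -, hK⟩ := finite_window hZ.isClosed (q := fun z => φ z 1)
    ((continuous_apply 1).comp_continuousOn hφ) Set.univ (by
      intro z _ z' _ h
      rw [show z = z' from funext fun g => h g trivial])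
  have hval : ∀ z ∈ Z, ∀ g, φ (shift g⁻¹ z) 1 = φ z g := by
    intro z hz g
    rw [heq _ _ hz]; simp [shift]
  have hloc : ∀ z ∈ Z, ∀ z' ∈ Z, ∀ g, (∀ h ∈ K, z (g * h) = z' (g * h)) → φ z g = φ z' g := by
    intro z hz z' hz' g hag
    rw [← hval z hz, ← hval z' hz']
    refine hK _ (hZ.shift_mem _ hz) _ (hZ.shift_mem _ hz') ?_
    intro h hh
    simpa [shift] using hag h hh
  obtain ⟨N, hN⟩ := side_eventually i₀ (K.image Prod.fst)
  obtain ⟨D, hD⟩ := key i₀ hZ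
  have hper : ∀ z ∈ Z, (∀ n : ℤ, ∀ j, φ z (FreeGroup.of i₀ ^ n, j) = 2 ↔ ((D + 1 : ℕ) : ℤ) ∣ n) →
      ∀ v, φ z (v * genA i₀ ^ (D + 1)) = φ z v := by
    intro z hz h v
    refine hmaps hz (FreeGroup.of i₀ ^ (0 : ℤ), 1) v (D + 1) ((h 0 1).2 (by simp)) ?_
    have := (h ((D + 1 : ℕ) : ℤ) 1).2 (by simp)
    rw [zpow_natCast] at this
    simpa [genA] using this
  refine hD (Z ∩ φ ⁻¹' {x | ∀ n : ℤ, ∀ j, x (FreeGroup.of i₀ ^ n, j) = 2 ↔ ((D + 1 : ℕ) : ℤ) ∣ n})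
    (fun d z => decide (φ z (FreeGroup.of i₀ ^ ((d : ℤ) + 1), 1) = 1))
    Set.inter_subset_left ?_ ?_ ?_ ?_ ?_
  · refine hφ.preimage_isClosed_of_isClosed hZ.isClosed ?_
    have : {x : FreeGroup (Fin k) × Multiplicative ℤ → Fin 3 |
        ∀ n : ℤ, ∀ j, x (FreeGroup.of i₀ ^ n, j) = 2 ↔ ((D + 1 : ℕ) : ℤ) ∣ n} =
        ⋂ (n : ℤ) (j : Multiplicative ℤ),
          (fun x : FreeGroup (Fin k) × Multiplicative ℤ → Fin 3 => x (FreeGroup.of i₀ ^ n, j)) ⁻¹'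
            {c | c = 2 ↔ ((D + 1 : ℕ) : ℤ) ∣ n} := by
      ext x
      simp only [Set.mem_iInter]
      rfl
    rw [this]
    exact isClosed_iInter fun n => isClosed_iInter fun j =>
      IsClosed.preimage (by fun_prop) (isClosed_discrete _)
  · rintro n z ⟨hz, hz2⟩
    refine ⟨hZ.shift_mem _ hz, ?_⟩
    intro m j
    rw [heq _ _ hz]
    simpa [shift] using hz2 m (n⁻¹ * j)
  · intro d
    have h1 : ContinuousOn (fun z => φ z (FreeGroup.of i₀ ^ ((d : ℤ) + 1), 1)) Z :=
      (continuous_apply _).comp_continuousOn hφ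
    exact ((continuous_of_discreteTopology (f := fun c : Fin 3 => decide (c = 1))).comp_continuousOn
      h1).mono Set.inter_subset_left
  · rintro z ⟨hz, hz2⟩ z' ⟨hz', hz2'⟩ y hy hyg d
    have hneg : ∀ n : ℤ, N ≤ n → ∀ j,
        φ y (FreeGroup.of i₀ ^ (-n), j) = φ z' (FreeGroup.of i₀ ^ (-n), j) := by
      intro n hn j
      refine hloc y hy z' hz' _ ?_
      rintro ⟨h, i⟩ hh
      exact (hyg _ _).1 (hN n hn h (Finset.mem_image_of_mem Prod.fst hh)).1
    have hpos : ∀ n : ℤ, N ≤ n → ∀ j,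
        φ y (FreeGroup.of i₀ ^ n, j) = φ z (FreeGroup.of i₀ ^ n, j) := by
      intro n hn j
      refine hloc y hy z hz _ ?_
      rintro ⟨h, i⟩ hh
      exact (hyg _ _).2 (hN n hn h (Finset.mem_image_of_mem Prod.fst hh)).2
    obtain ⟨t, ht0, htN⟩ : ∃ t : ℤ, 0 ≤ t ∧ N + D + 1 ≤ t := ⟨max 0 (N + D + 1), by simp, by simp⟩
    have htp : t ≤ t * ((D + 1 : ℕ) : ℤ) := by
      push_cast
      nlinarith
    have hpy : ∀ v, φ y (v * genA i₀ ^ (D + 1)) = φ y v := by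
      intro v
      refine hmaps hy (FreeGroup.of i₀ ^ (-((t + 1) * ((D + 1 : ℕ) : ℤ))), 1) v (D + 1) ?_ ?_
      · rw [hneg _ (by push_cast at htp ⊢; nlinarith)]
        exact (hz2' _ _).2 (by simp)
      · have e : ((FreeGroup.of i₀ ^ (-((t + 1) * ((D + 1 : ℕ) : ℤ))), 1) :
            FreeGroup (Fin k) × Multiplicative ℤ) * genA i₀ ^ (D + 1)
            = (FreeGroup.of i₀ ^ (-(t * ((D + 1 : ℕ) : ℤ))), 1) := by
          ext
          · simp only [genA, Prod.fst_mul, Prod.pow_fst]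
            rw [← zpow_natCast, ← zpow_add]
            congr 1; ring
          · simp [genA]
        rw [e, hneg _ (by omega)]
        exact (hz2' _ _).2 (by simp)
    have hd := d.2
    have e1 := periodic_iterate (hper z hz hz2) ((d : ℤ) + 1) t 1
    have e2 := periodic_iterate (hper z' hz' hz2') ((d : ℤ) + 1) (-t) 1
    have e3 := periodic_iterate hpy ((d : ℤ) + 1) t 1
    have e4 := periodic_iterate hpy ((d : ℤ) + 1) (-t) 1
    have e5 := hpos ((d : ℤ) + 1 + t * ((D + 1 : ℕ) : ℤ)) (by omega) 1
    have e6 := hneg (-((d : ℤ) + 1 + -t * ((D + 1 : ℕ) : ℤ))) (by rw [neg_mul]; omega) 1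
    rw [neg_neg] at e6
    rw [← e1, ← e5, e3, ← e4, e6, e2]
  · intro β
    obtain ⟨z, hz, hzx⟩ := hsurj (testVal_mem i₀ D β)
    refine ⟨z, ⟨hz, ?_⟩, ?_⟩
    · intro n j
      rw [hzx]
      simp only [testVal_eq_two, expSum_zpow]
    · intro d n
      rw [heq _ _ hz, hzx]
      simp only [shift]
      rw [← testVal_read D β d n]
      simp only [Prod.inv_mk, Prod.mk_mul_mk, inv_one, one_mul, mul_one, expSum_zpow]
      simp

end PartOne

end SelfSim
namespace SelfSim

section PartTwo

variable {k : ℕ}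

/-- Enumeration of `ℕ × ℤ`. -/
def enumNZ : ℕ ≃ ℕ × ℤ :=
  Nat.pairEquiv.symm.trans (Equiv.prodCongr (Equiv.refl ℕ) Equiv.intEquivNat.symm)

/-- Translation by `-n` in the second coordinate. -/
def transl (n : ℤ) (i : ℕ) : ℕ := enumNZ.symm ((enumNZ i).1, (enumNZ i).2 - n)

theorem transl_zero (i : ℕ) : transl 0 i = i := by simp [transl]

theorem transl_add (m n : ℤ) (i : ℕ) : transl (m + n) i = transl m (transl n i) := by
  simp [transl, sub_sub, add_comm]

theorem transl_enum (n : ℤ) (d : ℕ) (j : ℤ) :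
    transl n (enumNZ.symm (d, j)) = enumNZ.symm (d, j - n) := by
  simp [transl]

theorem intCode_pred (c : ℕ) : Equiv.intEquivNat (Equiv.intEquivNat.symm c - 1) =
    if c % 2 = 0 then (if c = 0 then 1 else c - 2) else c + 2 := by
  obtain ⟨z, rfl⟩ := Equiv.intEquivNat.surjective c
  rw [Equiv.symm_apply_apply]
  rcases z with n | n
  · have h1 : Equiv.intEquivNat (Int.ofNat n) = 2 * n := rfl
    rcases n with _ | n
    · rfl
    · have h2 : Int.ofNat (n + 1) - 1 = Int.ofNat n := by simp
      have h3 : Equiv.intEquivNat (Int.ofNat n) = 2 * n := rfl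
      have h1' : Equiv.intEquivNat (Int.ofNat (n + 1)) = 2 * (n + 1) := rfl
      rw [h2, h1', h3]
      rw [if_pos (by omega), if_neg (by omega)]
      omega
  · have h1 : Equiv.intEquivNat (Int.negSucc n) = 2 * n + 1 := rfl
    have h2 : Int.negSucc n - 1 = Int.negSucc (n + 1) := rfl
    have h3 : Equiv.intEquivNat (Int.negSucc (n + 1)) = 2 * (n + 1) + 1 := rfl
    rw [h2, h1, h3]
    split_ifs <;> omega

theorem intCode_succ (c : ℕ) : Equiv.intEquivNat (Equiv.intEquivNat.symm c + 1) =
    if c % 2 = 0 then c + 2 else (if c = 1 then 0 else c - 2) := by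
  obtain ⟨z, rfl⟩ := Equiv.intEquivNat.surjective c
  rw [Equiv.symm_apply_apply]
  rcases z with n | n
  · have h1 : Equiv.intEquivNat (Int.ofNat n) = 2 * n := rfl
    have h2 : Int.ofNat n + 1 = Int.ofNat (n + 1) := rfl
    have h3 : Equiv.intEquivNat (Int.ofNat (n + 1)) = 2 * (n + 1) := rfl
    rw [h2, h1, h3]
    split_ifs <;> omega
  · have h1 : Equiv.intEquivNat (Int.negSucc n) = 2 * n + 1 := rfl
    rcases n with _ | n
    · rfl
    · have h2 : Int.negSucc (n + 1) + 1 = Int.negSucc n := rfl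
      have h3 : Equiv.intEquivNat (Int.negSucc n) = 2 * n + 1 := rfl
      rw [h2, h1, h3]
      split_ifs <;> omega

theorem transl_primrec (n : ℤ) : Primrec (transl n) := by
  have hsnd : Primrec fun i : ℕ => i.unpair.2 := Primrec.snd.comp Primrec.unpair
  have hfst : Primrec fun i : ℕ => i.unpair.1 := Primrec.fst.comp Primrec.unpair
  have hmod : PrimrecPred fun i : ℕ => i.unpair.2 % 2 = 0 :=
    Primrec.eq.comp (Primrec.nat_mod.comp hsnd (Primrec.const 2)) (Primrec.const 0)
  have hadd : Primrec fun i : ℕ => i.unpair.2 + 2 := Primrec.nat_add.comp hsnd (Primrec.const 2)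
  have hsub : Primrec fun i : ℕ => i.unpair.2 - 2 := Primrec.nat_sub.comp hsnd (Primrec.const 2)
  have h1 : Primrec (transl 1) := by
    refine (Primrec₂.natPair.comp hfst (Primrec.ite hmod (Primrec.ite
      (Primrec.eq.comp hsnd (Primrec.const 0)) (Primrec.const 1) hsub) hadd)).of_eq fun i => ?_
    rw [← intCode_pred]
    rfl
  have h2 : Primrec (transl (-1)) := by
    refine (Primrec₂.natPair.comp hfst (Primrec.ite hmod hadd (Primrec.ite
      (Primrec.eq.comp hsnd (Primrec.const 1)) (Primrec.const 0) hsub))).of_eq fun i => ?_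
    rw [← intCode_succ]
    rfl
  induction n using Int.induction_on with
  | zero => exact Primrec.id.of_eq fun i => (transl_zero i).symm
  | succ n ih => exact (ih.comp h1).of_eq fun i => (transl_add _ _ i).symm
  | pred n ih => exact (ih.comp h2).of_eq fun i => (transl_add _ _ i).symm

theorem exists_lt_primrec {β : Type*} [Primcodable β] {R : ℕ → β → Prop} (hf : PrimrecRel R) :
    PrimrecRel fun (n : ℕ) y => ∃ x < n, R x y :=
  (hf.exists_mem_list.comp (Primrec.list_range.comp Primrec.fst) Primrec.snd).of_eq (by simp)

theorem exists_fin_primrec {α : Type*} [Primcodable α] {m : ℕ} {p : Fin m → α → Prop}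
    (hp : ∀ i, PrimrecPred (p i)) : PrimrecPred fun a => ∃ i, p i a := by
  classical
  have h : PrimrecRel p := by
    have : Primrec₂ fun (i : Fin m) (a : α) => decide (p i a) :=
      Primrec.fin_curry₁.2 fun i => (hp i).decide
    exact Primrec.primrecPred this
  exact (h.exists_mem_list.comp (Primrec.const (List.finRange m)) Primrec.id).of_eq fun a => by simp

/-- The action: `F_k` acts trivially and `ℤ` acts by infinitely many copies of the full shift. -/
def bigAct (g : FreeGroup (Fin k) × Multiplicative ℤ) (x : ℕ → Bool) : ℕ → Bool :=
  fun i => x (transl g.2.toAdd i)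

theorem setRep_re {m : ℕ} (s : Fin m → FreeGroup (Fin k) × Multiplicative ℤ) :
    RE fun w : List (Fin m → Bool) =>
      ∀ x : ℕ → Fin m → Bool, ExtendsWord x w → x ∉ SetRep s bigAct Set.univ := by
  classical
  let d : Fin m → Bool := fun _ => true
  let τ : Fin m → ℕ → ℕ := fun i => transl (s i).2.toAdd
  have hτ : ∀ i, Primrec (τ i) := fun i => transl_primrec _
  have hmain : PrimrecPred fun w : List (Fin m → Bool) => ∃ i j : Fin m,
      ∃ n' < w.length, ∃ n < w.length, τ i n = τ j n' ∧ w.getD n d i ≠ w.getD n' d j := by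
    refine exists_fin_primrec fun i => exists_fin_primrec fun j => ?_
    have hev : ∀ i : Fin m, Primrec fun f : Fin m → Bool => f i := fun i => Primrec.dom_finite _
    have hR1 : PrimrecRel fun (n : ℕ) (p : ℕ × List (Fin m → Bool)) =>
        τ i n = τ j p.1 ∧ p.2.getD n d i ≠ p.2.getD p.1 d j := by
      refine PrimrecPred.and (Primrec.eq.comp ((hτ i).comp Primrec.fst)
        ((hτ j).comp (Primrec.fst.comp Primrec.snd))) (PrimrecPred.not (Primrec.eq.comp
        ((hev i).comp ((Primrec.list_getD d).comp (Primrec.snd.comp Primrec.snd) Primrec.fst))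
        ((hev j).comp ((Primrec.list_getD d).comp (Primrec.snd.comp Primrec.snd)
          (Primrec.fst.comp Primrec.snd)))))
    have hR2 : PrimrecRel fun (n' : ℕ) (w : List (Fin m → Bool)) =>
        ∃ n < w.length, τ i n = τ j n' ∧ w.getD n d i ≠ w.getD n' d j :=
      by
      have h := exists_lt_primrec hR1
      have h' : PrimrecPred fun p : ℕ × List (Fin m → Bool) =>
          ∃ n < p.2.length, τ i n = τ j p.1 ∧ p.2.getD n d i ≠ p.2.getD p.1 d j :=
        h.comp (Primrec.list_length.comp Primrec.snd) Primrec.id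
      exact h'
    exact (exists_lt_primrec hR2).comp Primrec.list_length Primrec.id
  refine (hmain.of_eq fun w => ?_).toRE
  constructor
  · rintro ⟨i, j, n', hn', n, hn, he, hne⟩ y hy ⟨x, -, hx⟩
    apply hne
    have hyn : ∀ n, n < w.length → w.getD n d = y n := by
      intro n hn
      have := hy ⟨n, hn⟩
      simp only [List.get_eq_getElem] at this
      rw [this, List.getD_eq_getElem _ _ hn]
    rw [hyn n hn, hyn n' hn']
    have e1 := congrFun (hx i) n
    have e2 := congrFun (hx j) n'
    simp only [bigAct] at e1 e2
    rw [e1, e2]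
    exact congrArg x he
  · intro hdis
    by_contra hcon
    push Not at hcon
    -- build a point
    let x : ℕ → Bool := fun r =>
      if h : ∃ p : Fin m × ℕ, p.2 < w.length ∧ τ p.1 p.2 = r then
        w.getD h.choose.2 d h.choose.1 else true
    have hx : ∀ i n, n < w.length → x (τ i n) = w.getD n d i := by
      intro i n hn
      have h : ∃ p : Fin m × ℕ, p.2 < w.length ∧ τ p.1 p.2 = τ i n := ⟨(i, n), hn, rfl⟩
      simp only [x, dif_pos h]
      exact hcon _ _ n hn _ h.choose_spec.1 h.choose_spec.2
    refine hdis (fun n i => x (τ i n)) ?_ ⟨x, trivial, fun i => rfl⟩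
    intro n
    funext i
    change x (τ i n) = _
    rw [hx i n n.2, List.getD_eq_getElem _ _ n.2]
    rfl

theorem bigAct_eff : IsEffClosedAction (bigAct (k := k)) Set.univ := by
  obtain ⟨m, s, hs, i₁, hi₁⟩ := exists_generators (1 : FreeGroup (Fin k) × Multiplicative ℤ)
  refine ⟨m, s, isClosed_univ, ⟨fun g x _ => trivial, ?_, ?_⟩, ⟨i₁, hi₁⟩, hs, ?_, setRep_re s⟩
  · intro x _
    funext i
    simp [bigAct, transl_zero]
  · intro g h x _
    funext i
    simp only [bigAct, Prod.snd_mul, toAdd_mul]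
    rw [add_comm, transl_add]
  · have : SetRep s (bigAct (k := k)) Set.univ = ⋂ (i : Fin m) (n : ℕ),
        {y | y n i = y (transl (s i).2.toAdd n) i₁} := by
      ext y
      simp only [Set.mem_iInter]
      constructor
      · rintro ⟨x, -, hx⟩ i n
        have h1 := congrFun (hx i₁) (transl (s i).2.toAdd n)
        have h2 := congrFun (hx i) n
        simp only [bigAct, hi₁, Prod.snd_one, toAdd_one, transl_zero] at h1 h2
        exact h2.trans h1.symm
      · intro h
        exact ⟨fun n => y n i₁, trivial, fun i => funext fun n => h i n⟩
    rw [this]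
    exact isClosed_iInter fun i => isClosed_iInter fun n => isClosed_eq (by fun_prop) (by fun_prop)

theorem bigAct_not_factor (i₀ : Fin k) : ¬ IsFactorOfSFT (bigAct (k := k)) Set.univ := by
  classical
  rintro ⟨b, Z, φ, hZ, hφ, -, hsurj, heq⟩
  obtain ⟨D, hD⟩ := key i₀ hZ
  have htriv : ∀ z ∈ Z, ∀ g, φ (shift (g, 1) z) = φ z := by
    intro z hz g
    rw [heq _ _ hz]
    funext i
    simp [bigAct, transl_zero]
  have hcont : ∀ i, ContinuousOn (fun z => φ z i) Z := fun i =>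
    (continuous_apply i).comp_continuousOn hφ
  refine hD Z (fun d z => φ z (enumNZ.symm (d, 0))) subset_rfl hZ.isClosed
    (fun n z hz => hZ.shift_mem _ hz) (fun d => hcont _) ?_ ?_
  · intro z hz z' hz' y hy hyg d
    obtain ⟨K, -, hK⟩ := finite_window hZ.isClosed (hcont (enumNZ.symm (d, 0))) Set.univ (by
      intro z _ z' _ h
      rw [show z = z' from funext fun g => h g trivial])
    obtain ⟨N, hN⟩ := side_eventually i₀ (K.image Prod.fst)
    have h1 : φ y (enumNZ.symm (d, 0)) = φ z' (enumNZ.symm (d, 0)) := by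
      rw [← htriv y hy (FreeGroup.of i₀ ^ N), ← htriv z' hz' (FreeGroup.of i₀ ^ N)]
      refine hK _ (hZ.shift_mem _ hy) _ (hZ.shift_mem _ hz') ?_
      rintro ⟨h, i⟩ hh
      have := (hN N le_rfl h (Finset.mem_image_of_mem Prod.fst hh)).1
      rw [zpow_neg] at this
      exact (hyg _ _).1 this
    have h2 : φ y (enumNZ.symm (d, 0)) = φ z (enumNZ.symm (d, 0)) := by
      rw [← htriv y hy (FreeGroup.of i₀ ^ (-N)), ← htriv z hz (FreeGroup.of i₀ ^ (-N))]
      refine hK _ (hZ.shift_mem _ hy) _ (hZ.shift_mem _ hz) ?_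
      rintro ⟨h, i⟩ hh
      have := (hN N le_rfl h (Finset.mem_image_of_mem Prod.fst hh)).2
      rw [← neg_neg N, zpow_neg] at this
      exact (hyg _ _).2 this
    exact h2.symm.trans h1
  · intro β
    obtain ⟨z, hz, hzx⟩ := hsurj (Set.mem_univ (fun i : ℕ =>
      if h : (enumNZ i).1 < D then β ⟨(enumNZ i).1, h⟩ (enumNZ i).2 else true))
    refine ⟨z, hz, fun d n => ?_⟩
    rw [heq _ _ hz, hzx]
    simp [bigAct, transl_enum]

end PartTwo

end SelfSim

namespace SelfSim

/-- For `k ≥ 1` and `Γ = F_k × ℤ`, there is a `Γ`-subshift over a finite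
alphabet which is effectively closed by patterns but not sofic; in particular `F_k × ℤ`
is not self-simulable. -/
theorem freeGroup_times_int_not_selfSimulable (k : ℕ) (hk : 1 ≤ k) :
    (∃ (a : ℕ) (X : Set (FreeGroup (Fin k) × Multiplicative ℤ → Fin a)),
        IsSubshift X ∧ EffClosedByPatterns X ∧ ¬ IsSofic X) ∧
      ¬ SelfSimulable (FreeGroup (Fin k) × Multiplicative ℤ) := by
  refine ⟨⟨3, markerShift ⟨0, hk⟩, markerShift_isSubshift _, markerShift_eff _,
    markerShift_not_sofic _⟩, fun h => ?_⟩
  exact bigAct_not_factor ⟨0, hk⟩ (h _ _ bigAct_eff)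

end SelfSim
end

section
/- Let Γ be a finitely generated self-simulable group and let N ≤ Γ be a subgroup of finite index. Then N is finitely generated and self-simulable. -/
open scoped Pointwise

namespace SelfSim

/-! ### Computability helpers -/

/-- A recursively enumerable predicate is enumerated by a primitive recursive function. -/
theorem re_enum {α : Type*} [Primcodable α] {p : α → Prop} (h : RE p) :
    ∃ e : ℕ → Option α, Primrec e ∧ ∀ a, p a ↔ ∃ n, e n = some a := by
  obtain ⟨c, hc⟩ := Nat.Partrec.Code.exists_code.1 h
  refine ⟨fun n => ((Nat.Partrec.Code.evaln n.unpair.1 c n.unpair.2).bind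
    fun _ => Encodable.decode n.unpair.2), ?_, ?_⟩
  · have h1 : Primrec fun n : ℕ => Nat.Partrec.Code.evaln n.unpair.1 c n.unpair.2 :=
      Nat.Partrec.Code.primrec_evaln.comp
        (Primrec.pair (Primrec.pair (Primrec.fst.comp Primrec.unpair) (Primrec.const c))
          (Primrec.snd.comp Primrec.unpair))
    exact Primrec.option_bind h1
      (Primrec.decode.comp (Primrec.snd.comp (Primrec.unpair.comp Primrec.fst)))
  · intro a
    have key : ∀ i : ℕ, Encodable.decode (α := α) i = some a →
        ((∃ x, x ∈ Nat.Partrec.Code.eval c i) ↔ p a) := by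
      intro i hi
      have := congrFun hc i
      rw [this]
      simp [hi]
    constructor
    · intro ha
      obtain ⟨x, hx⟩ := (key (Encodable.encode a) (Encodable.encodek a)).2 ha
      obtain ⟨k, hk⟩ := Nat.Partrec.Code.evaln_complete.1 hx
      refine ⟨Nat.pair k (Encodable.encode a), ?_⟩
      simp only [Nat.unpair_pair]
      rw [Option.mem_def.1 hk]
      simp
    · rintro ⟨n, hn⟩
      obtain ⟨x, hx, hd⟩ := Option.bind_eq_some_iff.1 hn
      exact (key _ hd).1 ⟨x, Nat.Partrec.Code.evaln_sound hx⟩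

/-- Existential quantification of a primitive recursive relation is recursively enumerable. -/
theorem re_of_exists {α : Type*} [Primcodable α] {D : ℕ → α → Prop} (hD : PrimrecRel D)
    {p : α → Prop} (h : ∀ a, p a ↔ ∃ n, D n a) : RE p := by
  classical
  have h1 : Computable₂ fun (a : α) (n : ℕ) => decide (D n a) :=
    (hD.decide.comp Primrec.snd Primrec.fst).to_comp
  have h2 := (Partrec.rfind h1.partrec₂).dom_re
  refine REPred.of_eq h2 fun a => ?_
  rw [h, Nat.rfind_dom]
  simp

theorem primrec_pow2 : Primrec fun n : ℕ => 2 ^ n := by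
  have : Primrec fun n : ℕ => Nat.rec (motive := fun _ => ℕ) 1 (fun _ r => r * 2) n :=
    Primrec.nat_rec₁ 1 (Primrec.nat_mul.comp Primrec.snd (Primrec.const 2))
  refine this.of_eq fun n => ?_
  induction n with
  | zero => rfl
  | succ n ih => rw [pow_succ, ← ih]

theorem primrec_testBit : Primrec₂ Nat.testBit := by
  have h : Primrec fun q : ℕ × ℕ => decide (q.1 / 2 ^ q.2 % 2 = 1) :=
    PrimrecPred.decide (Primrec.eq.comp (Primrec.nat_mod.comp
      (Primrec.nat_div.comp Primrec.fst (primrec_pow2.comp Primrec.snd)) (Primrec.const 2))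
      (Primrec.const 1))
  exact h.of_eq fun q => (Nat.testBit_eq_decide_div_mod_eq).symm

/-- The cube (conjunction of literals) describing a word. -/
def wordCube {m : ℕ} (w : List (Fin m → Bool)) : List ((ℕ × Fin m) × Bool) :=
  (List.range w.length).flatMap fun n =>
    (List.finRange m).map fun i => ((n, i), (w.getD n (fun _ => false)) i)

theorem primrec_wordCube {m : ℕ} : Primrec (wordCube (m := m)) := by
  have happ : Primrec fun q : (Fin m → Bool) × Fin m => q.1 q.2 := Primrec.dom_finite _
  refine Primrec.list_flatMap (Primrec.list_range.comp Primrec.list_length) ?_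
  refine Primrec.list_map (Primrec.const _) ?_
  refine Primrec.pair (Primrec.pair (Primrec.snd.comp Primrec.fst) Primrec.snd) ?_
  exact happ.comp (Primrec.pair ((Primrec.list_getD _).comp
    (Primrec.fst.comp Primrec.fst) (Primrec.snd.comp Primrec.fst)) Primrec.snd)

theorem extendsWord_iff_wordCube {m : ℕ} (y : ℕ → Fin m → Bool) (w : List (Fin m → Bool)) :
    ExtendsWord y w ↔ ∀ p ∈ wordCube w, y p.1.1 p.1.2 = p.2 := by
  constructor
  · intro h p hp
    simp only [wordCube, List.mem_flatMap, List.mem_range, List.mem_map] at hp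
    obtain ⟨n, hn, i, -, rfl⟩ := hp
    have := h ⟨n, hn⟩
    simp only at this ⊢
    rw [this]
    simp [hn]
  · intro h i
    funext j
    have := h ((i, j), (w.getD i (fun _ => false)) j) (by
      simp only [wordCube, List.mem_flatMap, List.mem_range, List.mem_map]
      exact ⟨i, i.2, j, List.mem_finRange j, rfl⟩)
    simp only at this
    rw [this]
    simp

/-- An effectively closed set is cut out by a primitive recursive sequence of forbidden cubes. -/
theorem effClosed_cubes {m : ℕ} {Z : Set (ℕ → Fin m → Bool)} (h : EffectivelyClosedSet Z) :
    ∃ e : ℕ → Option (List ((ℕ × Fin m) × Bool)), Primrec e ∧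
      ∀ y, y ∈ Z ↔ ∀ n c, e n = some c → ¬ ∀ p ∈ c, y p.1.1 p.1.2 = p.2 := by
  obtain ⟨hcl, hre⟩ := h
  obtain ⟨e, he, hee⟩ := re_enum hre
  refine ⟨fun n => (e n).map wordCube, Primrec.option_map he
    (primrec_wordCube.comp Primrec.snd), fun y => ?_⟩
  constructor
  · intro hy n c hc hall
    obtain ⟨w, hw, rfl⟩ := Option.map_eq_some_iff.1 hc
    exact (hee w).2 ⟨n, hw⟩ y ((extendsWord_iff_wordCube y w).2 hall) hy
  · intro hall
    by_contra hy
    -- a whole cylinder around `y` misses `Z`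
    have hopen : Zᶜ ∈ nhds y := hcl.isOpen_compl.mem_nhds hy
    have : ∃ M : ℕ, ∀ x : ℕ → Fin m → Bool, (∀ i < M, x i = y i) → x ∉ Z := by
      rw [nhds_pi, Filter.mem_pi] at hopen
      obtain ⟨I, hI, t, ht, hsub⟩ := hopen
      obtain ⟨M, hM⟩ := hI.bddAbove
      refine ⟨M + 1, fun x hx => hsub ?_⟩
      intro i hi
      rw [hx i (Nat.lt_succ_of_le (hM hi))]
      exact mem_of_mem_nhds (ht i)
    obtain ⟨M, hM⟩ := this
    obtain ⟨n, hn⟩ := (hee (List.ofFn fun i : Fin M => y i)).1 (by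
      intro x hx
      refine hM x fun i hi => ?_
      have := hx ⟨i, by simpa using hi⟩
      simpa using this)
    refine hall n _ (by simp only [hn]; rfl) ((extendsWord_iff_wordCube y _).1 ?_)
    intro i
    simp

/-- Key decision procedure: the projection of a set cut out by a primitive recursive
sequence of forbidden cubes is effectively closed. -/
theorem effClosed_proj_nat {m : ℕ} (e : ℕ → Option (List (ℕ × Bool))) (he : Primrec e)
    (f : ℕ × Fin m → ℕ) (hf : Primrec f) :
    EffectivelyClosedSet {y : ℕ → Fin m → Bool | ∃ z : ℕ → Bool,
      (∀ n c, e n = some c → ¬ ∀ p ∈ c, z p.1 = p.2) ∧ ∀ n i, y n i = z (f (n, i))} := by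
  classical
  have clopen : ∀ c : List (ℕ × Bool), IsClopen {z : ℕ → Bool | ∀ p ∈ c, z p.1 = p.2} := by
    intro c
    have hc : {z : ℕ → Bool | ∀ p ∈ c, z p.1 = p.2} =
        ⋂ p ∈ c.toFinset, {z : ℕ → Bool | z p.1 = p.2} := by ext z; simp
    rw [hc]
    refine isClopen_biInter_finset fun p _ => ?_
    exact (isClopen_discrete {p.2}).preimage (continuous_apply p.1)
  constructor
  · have hR : IsClosed {z : ℕ → Bool | ∀ n c, e n = some c → ¬ ∀ p ∈ c, z p.1 = p.2} := by
      simp only [Set.ofPred_forall]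
      refine isClosed_iInter fun n => isClosed_iInter fun c => isClosed_iInter fun _ => ?_
      exact (clopen c).compl.isClosed
    have himg : {y : ℕ → Fin m → Bool | ∃ z : ℕ → Bool,
        (∀ n c, e n = some c → ¬ ∀ p ∈ c, z p.1 = p.2) ∧ ∀ n i, y n i = z (f (n, i))} =
        (fun (z : ℕ → Bool) n i => z (f (n, i))) ''
          {z : ℕ → Bool | ∀ n c, e n = some c → ¬ ∀ p ∈ c, z p.1 = p.2} := by
      ext y
      constructor
      · rintro ⟨z, hz, hy⟩
        exact ⟨z, hz, by funext n i; exact (hy n i).symm⟩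
      · rintro ⟨z, hz, rfl⟩
        exact ⟨z, hz, fun _ _ => rfl⟩
    rw [himg]
    refine (hR.isCompact.image ?_).isClosed
    exact continuous_pi fun n => continuous_pi fun i => continuous_apply _
  · let cubes : ℕ → List (Fin m → Bool) → List (List (ℕ × Bool)) := fun M w =>
      (List.range M).filterMap e ++ (wordCube w).map fun p => [(f p.1, !p.2)]
    have hcubes : Primrec₂ cubes := by
      refine Primrec.list_append.comp (Primrec.listFilterMap (Primrec.list_range.comp Primrec.fst)
        (he.comp Primrec.snd)) (Primrec.list_map (primrec_wordCube.comp Primrec.snd) ?_)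
      refine Primrec.list_cons.comp (Primrec.pair ?_ ?_) (Primrec.const [])
      · exact hf.comp (Primrec.fst.comp Primrec.snd)
      · exact Primrec.not.comp (Primrec.snd.comp Primrec.snd)
    have r1 : PrimrecRel fun (p : ℕ × Bool) (q : ℕ × ℕ) => p.1 < q.1 ∧ q.2.testBit p.1 = p.2 := by
      refine PrimrecPred.and (Primrec.nat_lt.comp (Primrec.fst.comp Primrec.fst)
        (Primrec.fst.comp Primrec.snd)) (Primrec.eq.comp (primrec_testBit.comp
          (Primrec.snd.comp Primrec.snd) (Primrec.fst.comp Primrec.fst))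
          (Primrec.snd.comp Primrec.fst))
    have r2 := r1.forall_mem_list.exists_mem_list
    have r3 : PrimrecRel fun (b : ℕ) (q : ℕ × List (Fin m → Bool)) =>
        ∃ c ∈ cubes q.1 q.2, ∀ p ∈ c, p.1 < q.1 ∧ b.testBit p.1 = p.2 :=
      r2.comp (hcubes.comp (Primrec.fst.comp Primrec.snd) (Primrec.snd.comp Primrec.snd))
        (Primrec.pair (Primrec.fst.comp Primrec.snd) Primrec.fst)
    have r4 : PrimrecRel fun (M : ℕ) (w : List (Fin m → Bool)) =>
        ∀ b ∈ List.range (2 ^ M), ∃ c ∈ cubes M w, ∀ p ∈ c, p.1 < M ∧ b.testBit p.1 = p.2 :=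
      r3.forall_mem_list.comp (Primrec.list_range.comp (primrec_pow2.comp Primrec.fst))
        (Primrec.pair Primrec.fst Primrec.snd)
    refine re_of_exists r4 fun w => ?_
    constructor
    · intro hbad
      -- compactness
      let U : ℕ → Set (ℕ → Bool) := fun M =>
        {z | ∃ c ∈ cubes M w, ∀ p ∈ c, p.1 < M ∧ z p.1 = p.2}
      have hUopen : ∀ M, IsOpen (U M) := by
        intro M
        have : U M = ⋃ c ∈ {c | c ∈ cubes M w ∧ ∀ p ∈ c, p.1 < M},
            {z : ℕ → Bool | ∀ p ∈ c, z p.1 = p.2} := by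
          ext z
          simp only [U, Set.mem_ofPred_eq, Set.mem_iUnion, exists_prop]
          constructor
          · rintro ⟨c, hc, h⟩
            exact ⟨c, ⟨hc, fun p hp => (h p hp).1⟩, fun p hp => (h p hp).2⟩
          · rintro ⟨c, ⟨hc, h1⟩, h2⟩
            exact ⟨c, hc, fun p hp => ⟨h1 p hp, h2 p hp⟩⟩
        rw [this]
        exact isOpen_biUnion fun c _ => (clopen c).isOpen
      have hmono : Monotone U := by
        intro M M' hMM z hz
        obtain ⟨c, hc, h⟩ := hz
        refine ⟨c, ?_, fun p hp => ⟨(h p hp).1.trans_le hMM, (h p hp).2⟩⟩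
        simp only [cubes, List.mem_append, List.mem_filterMap, List.mem_range] at hc ⊢
        rcases hc with ⟨n, hn, hc⟩ | hc
        · exact Or.inl ⟨n, hn.trans_le hMM, hc⟩
        · exact Or.inr hc
      have bound : ∀ c : List (ℕ × Bool), ∃ B, ∀ p ∈ c, p.1 < B := by
        intro c
        refine ⟨(c.toFinset.sup Prod.fst) + 1, fun p hp => Nat.lt_succ_of_le ?_⟩
        exact Finset.le_sup (f := Prod.fst) (List.mem_toFinset.2 hp)
      have hcover : (Set.univ : Set (ℕ → Bool)) ⊆ ⋃ M, U M := by
        intro z _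
        by_cases hz : ∀ n c, e n = some c → ¬ ∀ p ∈ c, z p.1 = p.2
        · have hne : ¬ ExtendsWord (fun n i => z (f (n, i))) w := fun hw =>
            hbad _ hw ⟨z, hz, fun _ _ => rfl⟩
          rw [extendsWord_iff_wordCube] at hne
          push Not at hne
          obtain ⟨p, hp, hpz⟩ := hne
          refine Set.mem_iUnion.2 ⟨f p.1 + 1, [(f p.1, !p.2)], ?_, ?_⟩
          · exact List.mem_append_right _ (List.mem_map.2 ⟨p, hp, rfl⟩)
          · intro q hq
            rw [List.mem_singleton.1 hq]
            refine ⟨Nat.lt_succ_self _, ?_⟩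
            exact Bool.eq_not.2 hpz
        · push Not at hz
          obtain ⟨n, c, hc, hall⟩ := hz
          obtain ⟨B, hB⟩ := bound c
          refine Set.mem_iUnion.2 ⟨max B (n + 1), c, ?_, fun p hp =>
            ⟨(hB p hp).trans_le (le_max_left _ _), hall p hp⟩⟩
          refine List.mem_append_left _ (List.mem_filterMap.2 ⟨n, ?_, hc⟩)
          exact List.mem_range.2 (lt_of_lt_of_le (Nat.lt_succ_self n) (le_max_right _ _))
      obtain ⟨M, hM⟩ := isCompact_univ.elim_directed_cover U hUopen hcover
        (directed_of_isDirected_le hmono)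
      exact ⟨M, fun b _ => hM (Set.mem_univ (fun i => b.testBit i))⟩
    · rintro ⟨M, hM⟩ y hyw ⟨z, hz, hyz⟩
      obtain ⟨c, hc, hcall⟩ := hM (Nat.ofBits fun i : Fin M => z i)
        (List.mem_range.2 (Nat.ofBits_lt_two_pow _))
      have hcz : ∀ p ∈ c, z p.1 = p.2 := by
        intro p hp
        obtain ⟨h1, h2⟩ := hcall p hp
        rwa [Nat.testBit_ofBits_lt _ _ h1] at h2
      rcases List.mem_append.1 hc with hc | hc
      · obtain ⟨n, _, hn⟩ := List.mem_filterMap.1 hc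
        exact hz n c hn hcz
      · obtain ⟨p, hp, rfl⟩ := List.mem_map.1 hc
        have h1 := hcz _ (List.mem_singleton.2 rfl)
        have h2 := (extendsWord_iff_wordCube y w).1 hyw p hp
        rw [hyz] at h2
        simp only at h1 h2
        rw [h2] at h1
        simp at h1

/-- General version of `effClosed_proj_nat` for arbitrary variable and clause index types. -/
theorem effClosed_proj {m : ℕ} {J K : Type*} [Primcodable J] [Primcodable K]
    (e : K → Option (List (J × Bool))) (he : Primrec e) (f : ℕ × Fin m → J) (hf : Primrec f) :
    EffectivelyClosedSet {y : ℕ → Fin m → Bool | ∃ z : J → Bool,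
      (∀ a c, e a = some c → ¬ ∀ p ∈ c, z p.1 = p.2) ∧ ∀ n i, y n i = z (f (n, i))} := by
  have he' : Primrec fun n : ℕ => (Encodable.decode (α := K) n).bind fun a =>
      (e a).map (List.map fun p : J × Bool => (Encodable.encode p.1, p.2)) := by
    refine Primrec.option_bind Primrec.decode (Primrec.option_map (he.comp Primrec.snd) ?_)
    exact Primrec.list_map Primrec.snd (Primrec.pair
      (Primrec.encode.comp (Primrec.fst.comp Primrec.snd)) (Primrec.snd.comp Primrec.snd))
  have := effClosed_proj_nat _ he' (fun q => Encodable.encode (f q)) (Primrec.encode.comp hf)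
  convert this using 2
  funext y
  apply propext
  constructor
  · rintro ⟨z, hz, hy⟩
    refine ⟨fun n => ((Encodable.decode n).map z).getD false, ?_, ?_⟩
    · intro n c hc
      obtain ⟨a, -, hc⟩ := Option.bind_eq_some_iff.1 hc
      obtain ⟨c', hc', rfl⟩ := Option.map_eq_some_iff.1 hc
      intro hall
      refine hz a c' hc' fun p hp => ?_
      have := hall _ (List.mem_map.2 ⟨p, hp, rfl⟩)
      simpa using this
    · intro n i
      simpa using hy n i
  · rintro ⟨z, hz, hy⟩
    refine ⟨fun j => z (Encodable.encode j), ?_, hy⟩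
    intro a c hc hall
    refine hz (Encodable.encode a) (c.map fun p : J × Bool => (Encodable.encode p.1, p.2)) ?_ ?_
    · simp [hc]
    · intro p hp
      obtain ⟨q, hq, rfl⟩ := List.mem_map.1 hp
      exact hall q hq

end SelfSim

namespace SelfSim

/-! ### Transversals -/

theorem exists_transversal {G : Type*} [Group G] (N : Subgroup G) (hfi : N.FiniteIndex) :
    ∃ (k : ℕ) (r : Fin k → G) (j : G → Fin k) (ν : G → N) (c₀ : Fin k),
      (∀ g, (ν g : G) * r (j g) = g) ∧ (∀ (n : N) (g : G), ν (n * g) = n * ν g) ∧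
      (∀ (n : N) (g : G), j (n * g) = j g) ∧ (∀ c, ν (r c) = 1) ∧ (∀ c, j (r c) = c) ∧
      r c₀ = 1 := by
  obtain ⟨T, hT, h1⟩ := N.exists_isComplement_right 1
  have hfin : Finite T := hT.finite_right_iff.2 hfi
  obtain ⟨k, ⟨E⟩⟩ := Finite.exists_equiv_fin T
  refine ⟨k, fun c => (E.symm c : G), fun g => E (hT.equiv g).2, fun g => (hT.equiv g).1,
    E ⟨1, h1⟩, ?_, ?_, ?_, ?_, ?_, ?_⟩
  · intro g
    simpa using hT.equiv_fst_mul_equiv_snd g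
  · intro n g
    simp only [hT.equiv_mul_left]
  · intro n g
    simp only [hT.equiv_mul_left]
  · intro c
    exact hT.equiv_fst_eq_one_of_mem_of_one_mem N.one_mem (E.symm c).2
  · intro c
    rw [← E.eq_symm_apply]
    exact hT.equiv_snd_eq_self_of_mem_of_one_mem N.one_mem (E.symm c).2
  · simp

theorem exists_gen_tuple {G : Type*} [Group G] (hfg : Group.FG G) :
    ∃ (m : ℕ) (t : Fin m → G), (∃ i, t i = 1) ∧ Submonoid.closure (Set.range t) = ⊤ := by
  classical
  obtain ⟨S, hS⟩ := (Group.fg_iff_monoid_fg.1 hfg).1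
  let S' := insert 1 S
  refine ⟨S'.card, fun i => (S'.equivFin.symm i : G), ⟨S'.equivFin ⟨1, by simp [S']⟩, by simp⟩, ?_⟩
  rw [eq_top_iff, ← hS]
  apply Submonoid.closure_mono
  intro g hg
  exact ⟨S'.equivFin ⟨g, Finset.mem_insert_of_mem hg⟩, by simp⟩

/-! ### The coinduced action -/

/-- Read off the `c`-th track of an interleaved sequence. -/
def track {k : ℕ} [NeZero k] (x : ℕ → Bool) (c : Fin k) : ℕ → Bool :=
  fun n => x ((Nat.divModEquiv k).symm (n, c))

/-- Interleave `k` sequences. -/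
def weave {k : ℕ} [NeZero k] (xs : Fin k → ℕ → Bool) : ℕ → Bool :=
  fun q => xs ((Nat.divModEquiv k) q).2 ((Nat.divModEquiv k) q).1

theorem track_weave {k : ℕ} [NeZero k] (xs : Fin k → ℕ → Bool) (c : Fin k) :
    track (weave xs) c = xs c := by
  funext n
  simp only [track, weave, Equiv.apply_symm_apply]

theorem weave_track {k : ℕ} [NeZero k] (x : ℕ → Bool) :
    weave (fun c : Fin k => track x c) = x := by
  funext n
  simp only [track, weave, Prod.mk.eta, Equiv.symm_apply_apply]

/-- The coinduced action, on interleaved sequences. -/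
def coind {G : Type*} [Group G] {N : Subgroup G} {k : ℕ} [NeZero k] (r : Fin k → G)
    (j : G → Fin k) (ν : G → N) (act : N → (ℕ → Bool) → ℕ → Bool) (g : G) (x : ℕ → Bool) :
    ℕ → Bool :=
  weave fun c => act (ν (r c * g)) (track x (j (r c * g)))

/-- The domain of the coinduced action. -/
def coindSet (k : ℕ) [NeZero k] (X : Set (ℕ → Bool)) : Set (ℕ → Bool) :=
  {x | ∀ c : Fin k, track x c ∈ X}

theorem coind_effClosed {G : Type*} [Group G] (hfg : Group.FG G) {N : Subgroup G} {k : ℕ}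
    [NeZero k] (r : Fin k → G) (j : G → Fin k) (ν : G → N)
    (h1 : ∀ g, (ν g : G) * r (j g) = g) (h2 : ∀ (n : N) (g : G), ν (n * g) = n * ν g)
    (h3 : ∀ (n : N) (g : G), j (n * g) = j g) (h4 : ∀ c, ν (r c) = 1) (h5 : ∀ c, j (r c) = c)
    (X : Set (ℕ → Bool)) (act : N → (ℕ → Bool) → ℕ → Bool) (hX : IsEffClosedAction act X) :
    IsEffClosedAction (coind r j ν act) (coindSet k X) := by
  classical
  obtain ⟨m, s, hcl, ⟨hmaps, hone, hmul⟩, ⟨i₀, hi₀⟩, hgen, heff⟩ := hX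
  obtain ⟨m', t, ht1, htgen⟩ := exists_gen_tuple hfg
  refine ⟨m', t, ?_, ⟨?_, ?_, ?_⟩, ht1, htgen, ?_⟩
  · have : coindSet k X = ⋂ c : Fin k, (fun x => track x c) ⁻¹' X := by
      ext x; simp [coindSet]
    rw [this]
    refine isClosed_iInter fun c => hcl.preimage ?_
    exact continuous_pi fun n => continuous_apply _
  · intro g x hx c
    simp only [coind, track_weave]
    exact hmaps _ (hx _)
  · intro x hx
    unfold coind
    conv_rhs => rw [← weave_track (k := k) x]
    congr 1
    funext c
    rw [mul_one, h4, h5]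
    exact hone _ (hx c)
  · intro g h x hx
    unfold coind
    congr 1
    funext c
    rw [track_weave]
    have e1 : r c * (g * h) = (ν (r c * g) : G) * (r (j (r c * g)) * h) := by
      rw [← mul_assoc, ← mul_assoc, h1]
    rw [e1, h2, h3]
    exact hmul _ _ _ (hx _)
  · obtain ⟨e, he, hemem⟩ := effClosed_cubes heff
    -- variables: (coset, word, position)
    let step : Fin m × List (Fin m) → List (Fin m) := fun q =>
      if q.1 = i₀ then q.2 else q.1 :: q.2
    have hstep : Primrec step := Primrec.ite
      (Primrec.eq.comp Primrec.fst (Primrec.const i₀)) Primrec.snd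
      (Primrec.list_cons.comp Primrec.fst Primrec.snd)
    let J := (Fin k × List (Fin m)) × ℕ
    let E : ℕ × (Fin k × List (Fin m)) → Option (List (J × Bool)) := fun a =>
      (e a.1).map (List.map fun p => (((a.2.1, step (p.1.2, a.2.2)), p.1.1), p.2))
    have hE : Primrec E := by
      refine Primrec.option_map (he.comp Primrec.fst) (Primrec.list_map Primrec.snd ?_)
      have pa : Primrec fun q : ((ℕ × (Fin k × List (Fin m))) × List ((ℕ × Fin m) × Bool)) ×
          ((ℕ × Fin m) × Bool) => q.1.1.2 := Primrec.snd.comp (Primrec.fst.comp Primrec.fst)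
      have pp : Primrec fun q : ((ℕ × (Fin k × List (Fin m))) × List ((ℕ × Fin m) × Bool)) ×
          ((ℕ × Fin m) × Bool) => q.2 := Primrec.snd
      exact Primrec.pair (Primrec.pair (Primrec.pair (Primrec.fst.comp pa)
        (hstep.comp (Primrec.pair (Primrec.snd.comp (Primrec.fst.comp pp)) (Primrec.snd.comp pa))))
        (Primrec.fst.comp (Primrec.fst.comp pp))) (Primrec.snd.comp pp)
    let R : Set (J → Bool) := {z | ∀ a c, E a = some c → ¬ ∀ p ∈ c, z p.1 = p.2}
    have hR : ∀ z : J → Bool, z ∈ R ↔ ∀ (c : Fin k) (u : List (Fin m)),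
        (fun n i => z ((c, step (i, u)), n)) ∈ SetRep s act X := by
      intro z
      constructor
      · intro hz c u
        rw [hemem]
        intro n cc hcc hall
        refine hz (n, (c, u)) _ (by simp only [E, hcc]; rfl) ?_
        intro p hp
        obtain ⟨q, hq, rfl⟩ := List.mem_map.1 hp
        exact hall q hq
      · rintro hz ⟨n, c, u⟩ cc hcc hall
        obtain ⟨c', hc', rfl⟩ := Option.map_eq_some_iff.1 hcc
        refine (hemem _).1 (hz c u) n c' hc' fun p hp => ?_
        exact hall _ (List.mem_map.2 ⟨p, hp, rfl⟩)
    have hR1 : ∀ z ∈ R, ∀ (c : Fin k) (u : List (Fin m)),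
        (fun n => z ((c, u), n)) ∈ X ∧ ∀ i, (fun n => z ((c, step (i, u)), n)) =
          act (s i) (fun n => z ((c, u), n)) := by
      intro z hz c u
      obtain ⟨x, hx, hxy⟩ := (hR z).1 hz c u
      have : (fun n => z ((c, u), n)) = x := by
        have := hxy i₀
        rw [hi₀, hone x hx] at this
        simpa [step] using this
      rw [this]
      exact ⟨hx, hxy⟩
    have hword : ∀ n : N, ∃ u : List (Fin m), ∀ z ∈ R, ∀ c : Fin k,
        (fun l => z ((c, u), l)) = act n (fun l => z ((c, []), l)) := by
      intro n
      have hn : n ∈ Submonoid.closure (Set.range s) := by rw [hgen]; trivial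
      induction hn using Submonoid.closure_induction_left with
      | one => exact ⟨[], fun z hz c => (hone _ (hR1 z hz c []).1).symm⟩
      | mul_left x hx y hy ih =>
        obtain ⟨i, rfl⟩ := hx
        obtain ⟨u, hu⟩ := ih
        refine ⟨step (i, u), fun z hz c => ?_⟩
        rw [(hR1 z hz c u).2 i, hu z hz c, hmul _ _ _ (hR1 z hz c []).1]
    choose word hword using hword
    let f : ℕ × Fin m' → J := fun q =>
      ((j (r (Nat.divModEquiv k q.1).2 * t q.2),
        word (ν (r (Nat.divModEquiv k q.1).2 * t q.2))), (Nat.divModEquiv k q.1).1)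
    have hf : Primrec f := by
      have d1 : Primrec fun q : ℕ × Fin m' => (Nat.divModEquiv k q.1).1 :=
        Primrec.nat_div.comp Primrec.fst (Primrec.const k)
      have d2 : Primrec fun q : ℕ × Fin m' => (Nat.divModEquiv k q.1).2 := by
        rw [← Primrec.fin_val_iff]
        exact (Primrec.nat_mod.comp Primrec.fst (Primrec.const k)).of_eq fun q => by
          simp [Nat.divModEquiv]
      have g1 : Primrec fun q : Fin k × Fin m' =>
        (j (r q.1 * t q.2), word (ν (r q.1 * t q.2))) := Primrec.dom_finite _
      exact Primrec.pair (g1.comp (Primrec.pair d2 Primrec.snd)) d1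
    have hmain := effClosed_proj E hE f hf
    have hset : SetRep t (coind r j ν act) (coindSet k X) = {y : ℕ → Fin m' → Bool |
        ∃ z : J → Bool, (∀ a c, E a = some c → ¬ ∀ p ∈ c, z p.1 = p.2) ∧
          ∀ n i, y n i = z (f (n, i))} := by
      ext y
      constructor
      · rintro ⟨x, hx, hy⟩
        let z : J → Bool := fun q => act (q.1.2.map s).prod (track x q.1.1) q.2
        have hz : z ∈ R := by
          rw [hR]
          intro c u
          refine ⟨act (u.map s).prod (track x c), hmaps _ (hx c), fun i => ?_⟩
          change act ((step (i, u)).map s).prod (track x c) = _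
          by_cases hi : i = i₀
          · subst hi
            simp only [step, if_true]
            rw [hi₀, hone _ (hmaps _ (hx c))]
          · simp only [step, if_neg hi, List.map_cons, List.prod_cons]
            exact hmul _ _ _ (hx c)
        refine ⟨z, hz, fun n i => ?_⟩
        have e1 := congrFun (hy i) n
        refine Eq.trans e1 ?_
        have e2 := congrFun (hword (ν (r (Nat.divModEquiv k n).2 * t i)) z hz
          (j (r (Nat.divModEquiv k n).2 * t i))) (Nat.divModEquiv k n).1
        refine Eq.trans ?_ e2.symm
        have e3 : (fun l => z ((j (r (Nat.divModEquiv k n).2 * t i), []), l)) =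
            track x (j (r (Nat.divModEquiv k n).2 * t i)) := hone _ (hx _)
        rw [e3]
        rfl
      · rintro ⟨z, hz, hy⟩
        have hz' : z ∈ R := hz
        refine ⟨weave fun c l => z ((c, []), l), ?_, ?_⟩
        · intro c
          rw [track_weave]
          exact (hR1 z hz' c []).1
        · intro i
          funext n
          rw [hy]
          unfold coind
          simp only [track_weave]
          exact congrFun (hword (ν (r (Nat.divModEquiv k n).2 * t i)) z hz'
            (j (r (Nat.divModEquiv k n).2 * t i))) (Nat.divModEquiv k n).1
    rw [hset]
    exact hmain

/-! ### Restriction of subshifts of finite type to a finite index subgroup -/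

theorem factor_restrict {G : Type*} [Group G] {N : Subgroup G} {k : ℕ}
    [NeZero k] (r : Fin k → G) (j : G → Fin k) (ν : G → N) (c₀ : Fin k)
    (h1 : ∀ g, (ν g : G) * r (j g) = g) (h2 : ∀ (n : N) (g : G), ν (n * g) = n * ν g)
    (h3 : ∀ (n : N) (g : G), j (n * g) = j g) (h4 : ∀ c, ν (r c) = 1) (h5 : ∀ c, j (r c) = c)
    (h6 : r c₀ = 1)
    (X : Set (ℕ → Bool)) (act : N → (ℕ → Bool) → ℕ → Bool)
    (hX : IsFactorOfSFT (coind r j ν act) (coindSet k X)) :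
    IsFactorOfSFT act X := by
  classical
  obtain ⟨q, Z, φ, ⟨F, L, hFL⟩, hcont, hmaps, hsurj, hequi⟩ := hX
  let α : Fin (Fintype.card (Fin k → Fin q)) ≃ (Fin k → Fin q) := (Fintype.equivFin _).symm
  -- extend a configuration on `N` to one on `G`
  let ext : (N → Fin (Fintype.card (Fin k → Fin q))) → (G → Fin q) := fun x g => α (x (ν g)) (j g)
  have hextsurj : ∀ z : G → Fin q, ∃ x, ext x = z := by
    intro z
    refine ⟨fun n => α.symm fun c => z (n * r c), ?_⟩
    funext g
    simp only [ext, Equiv.apply_symm_apply, h1]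
  have hextshift : ∀ (n : N) x, ext (shift n x) = shift (n : G) (ext x) := by
    intro n x
    funext g
    have e1 : ((n : G)⁻¹ * g) = ((n⁻¹ : N) : G) * g := by simp
    simp only [ext, shift]
    rw [e1, h2, h3]
  have hextcont : Continuous ext := by
    refine continuous_pi fun g => ?_
    have : Continuous fun a : Fin (Fintype.card (Fin k → Fin q)) => α a (j g) :=
      continuous_of_discreteTopology
    exact this.comp (continuous_apply (ν g))
  refine ⟨Fintype.card (Fin k → Fin q), ext ⁻¹' Z, fun x => track (φ (ext x)) c₀, ?_, ?_, ?_, ?_, ?_⟩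
  · let F' : Finset N := (Finset.univ ×ˢ F).image fun p : Fin k × G => ν (r p.1 * p.2)
    have hF' : ∀ (c : Fin k) (h : F), ν (r c * h) ∈ F' := fun c h =>
      Finset.mem_image.2 ⟨(c, h), by simp, rfl⟩
    refine ⟨F', {p | ∀ c : Fin k, (fun h : F =>
      α (p ⟨ν (r c * h), hF' c h⟩) (j (r c * h))) ∈ L}, fun x => ?_⟩
    rw [Set.mem_preimage, hFL]
    have key : ∀ (n : N) (c : Fin k), (fun h : F => ext x ((n : G) * r c * h)) =
        fun h : F => α (x (n * ν (r c * h))) (j (r c * h)) := by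
      intro n c
      funext h
      simp only [ext]
      rw [mul_assoc, h2, h3]
    constructor
    · intro hx n c
      have := hx ((n : G) * r c)
      rw [key] at this
      exact this
    · intro hx g
      have := hx (ν g) (j g)
      have e := key (ν g) (j g)
      rw [h1] at e
      rw [e]
      exact this
  · have ht : Continuous fun x : ℕ → Bool => track x c₀ :=
      continuous_pi fun n => continuous_apply _
    exact ht.comp_continuousOn (hcont.comp hextcont.continuousOn (Set.mapsTo_preimage ext Z))
  · intro x hx
    exact hmaps hx c₀
  · intro x hx
    obtain ⟨z, hz, hzx⟩ := hsurj (show weave (fun _ : Fin k => x) ∈ coindSet k X from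
      fun c => by rw [track_weave]; exact hx)
    obtain ⟨x', rfl⟩ := hextsurj z
    refine ⟨x', hz, ?_⟩
    simp only [hzx, track_weave]
  · intro n x hx
    have e0 := hequi (n : G) (ext x) hx
    simp only
    rw [hextshift, e0]
    unfold coind
    rw [track_weave]
    have e1 : r c₀ * (n : G) = (n : G) * r c₀ := by rw [h6]; simp
    rw [e1, h2, h3, h4, h5, mul_one]

/-- A finite index subgroup of a finitely generated self-simulable group is
finitely generated and self-simulable. -/
theorem finiteIndex_subgroup_selfSimulable
    (G : Type*) [Group G] (hfg : Group.FG G) (hss : SelfSimulable G)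
    (N : Subgroup G) (hfi : N.FiniteIndex) :
    Group.FG ↥N ∧ SelfSimulable ↥N := by
  refine ⟨N.fg_of_index_ne_zero, fun X act hX => ?_⟩
  obtain ⟨k, r, j, ν, c₀, h1, h2, h3, h4, h5, h6⟩ := exists_transversal N hfi
  have : NeZero k := ⟨fun h => by subst h; exact c₀.elim0⟩
  exact factor_restrict r j ν c₀ h1 h2 h3 h4 h5 h6 X act
    (hss _ _ (coind_effClosed hfg r j ν h1 h2 h3 h4 h5 X act hX))

end SelfSim
end
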